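/- For the elliptic curve E₁: y² = x³ + 1 over ℚ, the value of its L-function at s = 1 is L(E₁/ℚ, 1) = (∛4/(4√3))·ω, where ω = 3.059908⋯ is the real period constant of the lattice L_ω. -/

import Mathlib

noncomputable section

open Complex Real ComplexConjugate

/-- `τ = (−1+√−3)/2`, a primitive cube root of unity. -/
def tau : ℂ := (-1 + Real.sqrt 3 * Complex.I) / 2

/-- `√−3 = 1 + 2τ`, the square root of `−3` with positive imaginary part. -/
def sqrtm3 : ℂ := Real.sqrt 3 * Complex.I

/-- The ring of integers `O_K = ℤ[τ]` of `K = ℚ(√−3)`, as a subring of `ℂ`. -/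
def Eis : Subring ℂ := Subring.closure {tau}

/-- `τ` as an element of `ℤ[τ]`. -/
def tauO : Eis := ⟨tau, Subring.subset_closure rfl⟩

/-- `√−3` as an element of `ℤ[τ]`. -/
def sqrtm3O : Eis := 1 + 2 * tauO

/-- Membership in the lattice `L_ω = ω·ℤ[τ]`. -/
def inLattice (ω : ℝ) (z : ℂ) : Prop := ∃ a : Eis, z = (ω : ℂ) * a

/-- The Weierstrass `℘`-function of the lattice `L_ω = ω·ℤ[τ]`. -/
def wp (ω : ℝ) (z : ℂ) : ℂ :=
  1 / z ^ 2 + ∑' a : {w : ℂ // inLattice ω w ∧ w ≠ 0},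
    (1 / (z - (a : ℂ)) ^ 2 - 1 / (a : ℂ) ^ 2)

/-- The Weierstrass `ζ`-function of the lattice `L_ω = ω·ℤ[τ]`. -/
def wzeta (ω : ℝ) (z : ℂ) : ℂ :=
  1 / z + ∑' a : {w : ℂ // inLattice ω w ∧ w ≠ 0},
    (1 / (z - (a : ℂ)) + 1 / (a : ℂ) + z / (a : ℂ) ^ 2)

/-- The real cube root of 2, as a complex number. -/
def cbrt2 : ℂ := ((2 : ℝ) ^ ((1 : ℝ) / 3) : ℝ)

/-- The real cube root of 4, as a complex number. -/
def cbrt4 : ℂ := ((4 : ℝ) ^ ((1 : ℝ) / 3) : ℝ)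

section
open Filter Topology

/-- Weierstrass zeta with the `0`-term missing. -/
def zeta0 (L : PeriodPair) (z : ℂ) : ℂ :=
  ∑' l : L.lattice, if (l : ℂ) = 0 then 0 else (1 / (z - l) + 1 / l + z / (l : ℂ) ^ 2)

/-- Weierstrass zeta. -/
def zetaW (L : PeriodPair) (z : ℂ) : ℂ :=
  ∑' l : L.lattice, (1 / (z - l) + 1 / l + z / (l : ℂ) ^ 2)

lemma zeta_bound (r : ℝ) (hr : 0 < r) (s : ℂ) (hs : ‖s‖ < r) (l : ℂ) (h : 2 * r ≤ ‖l‖) :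
    ‖1 / (s - l) + 1 / l + s / l ^ 2‖ ≤ 2 * r ^ 2 * ‖l‖ ^ (-3 : ℝ) := by
  have h1 : s - l ≠ 0 := by
    intro h0; rw [sub_eq_zero] at h0; subst h0; linarith
  have hl : 0 < ‖l‖ := by linarith
  have hl0 : l ≠ 0 := norm_pos_iff.mp hl
  have h2 : ‖l‖ / 2 ≤ ‖s - l‖ := by
    rw [norm_sub_rev]
    exact .trans (by linarith) (norm_sub_norm_le l s)
  have e : 1 / (s - l) + 1 / l + s / l ^ 2 = s ^ 2 / (l ^ 2 * (s - l)) := by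
    field_simp; ring
  rw [e, norm_div, norm_mul, norm_pow, norm_pow]
  calc ‖s‖ ^ 2 / (‖l‖ ^ 2 * ‖s - l‖) ≤ r ^ 2 / (‖l‖ ^ 2 * (‖l‖ / 2)) := by gcongr
    _ = 2 * r ^ 2 / ‖l‖ ^ 3 := by field_simp
    _ = _ := by norm_cast

lemma hasSumLU_zeta0 (L : PeriodPair) :
    HasSumLocallyUniformly
      (fun (l : L.lattice) (z : ℂ) ↦ if (l : ℂ) = 0 then 0 else (1 / (z - l) + 1 / l + z / (l : ℂ) ^ 2))
      (zeta0 L) := by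
  refine L.hasSumLocallyUniformly_aux (u := fun r l => 2 * r ^ 2 * ‖l‖ ^ (-3 : ℝ)) _
    (fun _ _ ↦ (ZLattice.summable_norm_rpow _ _ (by simp; norm_num)).mul_left _) fun r hr ↦
    Filter.eventually_atTop.mpr ⟨2 * r, ?_⟩
  rintro _ h s hs l rfl
  split_ifs
  · simpa using! show 0 ≤ 2 * r ^ 2 * (‖↑l‖ ^ 3)⁻¹ by positivity
  · exact zeta_bound r hr s hs l h

lemma hasSum_zeta0 (L : PeriodPair) (z : ℂ) :
    HasSum (fun l : L.lattice ↦ if (l : ℂ) = 0 then 0 else (1 / (z - l) + 1 / l + z / (l : ℂ) ^ 2))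
      (zeta0 L z) := (hasSumLU_zeta0 L).hasSum

lemma hasSum_zetaW' (L : PeriodPair) (z : ℂ) :
    HasSum (fun l : L.lattice ↦ (1 / (z - l) + 1 / l + z / (l : ℂ) ^ 2)) (zeta0 L z + 1 / z) := by
  have h := (hasSum_zeta0 L z).add (hasSum_ite_eq (0 : L.lattice) (1 / z))
  refine h.congr_fun ?_
  intro l
  by_cases hl : l = 0
  · simp [hl]
  · simp [hl]

lemma zetaW_eq (L : PeriodPair) (z : ℂ) : zetaW L z = zeta0 L z + 1 / z := (hasSum_zetaW' L z).tsum_eq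

lemma hasSum_zetaW (L : PeriodPair) (z : ℂ) :
    HasSum (fun l : L.lattice ↦ (1 / (z - l) + 1 / l + z / (l : ℂ) ^ 2)) (zetaW L z) := by
  rw [zetaW_eq]; exact hasSum_zetaW' L z

lemma hasDerivAt_zterm (z l : ℂ) (h : z - l ≠ 0) :
    HasDerivAt (fun z => 1 / (z - l) + 1 / l + z / l ^ 2) (-(1 / (z - l) ^ 2 - 1 / l ^ 2)) z := by
  have h1 : HasDerivAt (fun z : ℂ => 1 / (z - l)) (-(1 / (z - l) ^ 2)) z := by
    have := ((hasDerivAt_id z).sub_const l).inv h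
    convert! this using 1
    · ext; simp
    · simp [neg_div]
  have h2 : HasDerivAt (fun z : ℂ => z / l ^ 2) (1 / l ^ 2) z := (hasDerivAt_id z).div_const _
  convert! (h1.add_const (1 / l)).add h2 using 1
  ring

lemma zeta0_diff (L : PeriodPair) : DifferentiableOn ℂ (zeta0 L) (L.lattice \ {0})ᶜ := by
  refine (hasSumLU_zeta0 L).hasSumLocallyUniformlyOn.differentiableOn
    (.of_forall fun s ↦ .fun_sum fun i hi ↦ ?_) L.isOpen_compl_lattice_sdiff
  split_ifs with h0
  · simp
  · intro z hz
    refine (hasDerivAt_zterm z i ?_).differentiableAt.differentiableWithinAt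
    intro h
    rw [sub_eq_zero] at h
    exact hz ⟨h ▸ i.2, by simpa [h] using h0⟩

lemma zeta0_deriv (L : PeriodPair) :
    Set.EqOn (deriv (zeta0 L)) (fun z => - L.weierstrassPExcept 0 z) (L.lattice \ {0})ᶜ := by
  have key : ∀ z ∈ ((L.lattice : Set ℂ) \ {0})ᶜ, ∀ i : L.lattice, (i : ℂ) ≠ 0 → z - i ≠ 0 := by
    intro z hz i h0 h
    rw [sub_eq_zero] at h
    exact hz ⟨h ▸ i.2, by simpa [h] using h0⟩
  refine ((hasSumLU_zeta0 L).tendstoLocallyUniformlyOn.deriv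
    (.of_forall fun s ↦ ?_) L.isOpen_compl_lattice_sdiff).unique ?_
  · refine .fun_sum fun i hi ↦ ?_
    split_ifs with h0
    · simp
    · intro z hz
      exact (hasDerivAt_zterm z i (key z hz i h0)).differentiableAt.differentiableWithinAt
  · have h1 := (L.hasSumLocallyUniformly_weierstrassPExcept 0).tendstoLocallyUniformlyOn
      (s := ((L.lattice : Set ℂ) \ {0})ᶜ)
    have h2 := h1.neg
    refine h2.congr ?_
    intro s z hz
    simp only [Function.comp_apply, Pi.neg_apply]
    rw [deriv_fun_sum]
    · rw [← Finset.sum_neg_distrib]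
      congr with i
      split_ifs with h0
      · simp
      · exact (hasDerivAt_zterm z i (key z hz i h0)).deriv.symm
    · intro i _
      split_ifs with h0
      · simp
      · exact (hasDerivAt_zterm z i (key z hz i h0)).differentiableAt

lemma hasDerivAt_zeta0 (L : PeriodPair) {z : ℂ} (hz : z ∈ ((L.lattice : Set ℂ) \ {0})ᶜ) :
    HasDerivAt (zeta0 L) (- L.weierstrassPExcept 0 z) z := by
  have e := zeta0_deriv L hz
  simp only at e
  rw [← e]
  exact ((zeta0_diff L).differentiableAt (L.isOpen_compl_lattice_sdiff.mem_nhds hz)).hasDerivAt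

lemma hasDerivAt_zetaW (L : PeriodPair) {z : ℂ} (hz : z ∉ L.lattice) :
    HasDerivAt (zetaW L) (- L.weierstrassP z) z := by
  have hz0 : z ≠ 0 := by rintro rfl; exact hz (zero_mem _)
  have h1 := hasDerivAt_zeta0 L (z := z) (by simp [hz])
  have h2 : HasDerivAt (fun z : ℂ => 1 / z) (-(1 / z ^ 2)) z := by
    simpa [neg_div] using (hasDerivAt_inv hz0)
  have h3 := h1.add h2
  have e : zetaW L = fun z => zeta0 L z + 1 / z := funext (zetaW_eq L)
  rw [e]
  convert! h3 using 1
  have := L.weierstrassPExcept_add 0 z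
  simp at this
  rw [← this]; simp; ring

lemma analyticAt_zeta0 (L : PeriodPair) {z : ℂ} (hz : z ∈ ((L.lattice : Set ℂ) \ {0})ᶜ) :
    AnalyticAt ℂ (zeta0 L) z :=
  (zeta0_diff L).analyticAt (L.isOpen_compl_lattice_sdiff.mem_nhds hz)

lemma analyticAt_zetaW (L : PeriodPair) {z : ℂ} (hz : z ∉ L.lattice) :
    AnalyticAt ℂ (zetaW L) z := by
  have : DifferentiableOn ℂ (zetaW L) (L.lattice : Set ℂ)ᶜ :=
    fun w hw => (hasDerivAt_zetaW L hw).differentiableAt.differentiableWithinAt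
  exact this.analyticAt (L.isClosed_lattice.isOpen_compl.mem_nhds hz)

lemma zetaW_neg (L : PeriodPair) (z : ℂ) : zetaW L (-z) = - zetaW L z := by
  simp only [zetaW]
  rw [← (Equiv.neg L.lattice).tsum_eq, ← tsum_neg]
  congr with l
  simp only [Equiv.neg_apply, NegMemClass.coe_neg]
  rw [show -z - -(l : ℂ) = -(z - l) by ring]
  simp only [one_div, inv_neg, neg_div]
  ring

lemma zeta0_zero (L : PeriodPair) : zeta0 L 0 = 0 := by
  simp [zeta0]

lemma lattice_compl_preconn (L : PeriodPair) : IsPreconnected ((L.lattice : Set ℂ)ᶜ) := by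
  refine (Set.Countable.isConnected_compl_of_one_lt_rank (by simp) ?_).2
  exact (countable_of_Lindelof_of_discrete (X := L.lattice))

/-- quasi-periods -/
lemma exists_quasi (L : PeriodPair) (l : ℂ) (hl : l ∈ L.lattice) :
    ∃ c : ℂ, ∀ z, z ∉ L.lattice → zetaW L (z + l) = zetaW L z + c := by
  have hw : L.ω₁ / 2 ∉ L.lattice := L.ω₁_div_two_notMem_lattice
  have hadd : ∀ z, z ∉ L.lattice → z + l ∉ L.lattice := fun z hz h => hz (by
    simpa using sub_mem h hl)
  refine ⟨zetaW L (L.ω₁ / 2 + l) - zetaW L (L.ω₁ / 2), fun z hz => ?_⟩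
  have hd : ∀ z ∉ L.lattice, HasDerivAt (fun z => zetaW L (z + l)) (- L.weierstrassP z) z := by
    intro z hz
    have := (hasDerivAt_zetaW L (hadd z hz)).comp_add_const z l
    have h2 := L.weierstrassP_add_coe z ⟨l, hl⟩
    simp at h2
    rwa [h2] at this
  have := IsOpen.eqOn_of_deriv_eq (𝕜 := ℂ) (f := fun z => zetaW L (z + l))
    (g := fun z => zetaW L z + (zetaW L (L.ω₁ / 2 + l) - zetaW L (L.ω₁ / 2)))
    L.isClosed_lattice.isOpen_compl (lattice_compl_preconn L)
    (fun z hz => (hd z hz).differentiableAt.differentiableWithinAt)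
    (fun z hz => ((hasDerivAt_zetaW L hz).add_const _).differentiableAt.differentiableWithinAt)
    (fun z hz => by
      rw [(hd z hz).deriv, ((hasDerivAt_zetaW L hz).add_const _).deriv])
    (x := L.ω₁ / 2) hw (by ring)
  exact this hz
end

section
open Filter Topology

lemma analytic_div_one {f : ℂ → ℂ} {z₀ : ℂ} (hf : AnalyticAt ℂ f z₀) (h0 : f z₀ = 0) :
    ∃ g, AnalyticAt ℂ g z₀ ∧ g z₀ = deriv f z₀ ∧ ∀ z, f z = (z - z₀) * g z := by
  refine ⟨dslope f z₀, ?_, dslope_same f z₀, fun z => ?_⟩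
  · obtain ⟨p, hp⟩ := hf
    exact ⟨_, hp.has_fpower_series_dslope_fslope⟩
  · have := sub_smul_dslope f z₀ z
    rw [h0, sub_zero, smul_eq_mul] at this
    exact this.symm

lemma liouville_aux (L : PeriodPair) (F : ℂ → ℂ)
    (hF : ∀ z₀, ∃ g, AnalyticAt ℂ g z₀ ∧ F =ᶠ[𝓝[≠] z₀] g)
    (hper : ∀ l ∈ L.lattice, ∀ z, ∀ᶠ w in 𝓝[≠] z, F (w + l) = F w) :
    ∃ c : ℂ, ∀ z, ∀ᶠ w in 𝓝[≠] z, F w = c := by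
  choose g hg hFg using hF
  have uniq : ∀ (z : ℂ) (u v : ℂ → ℂ), ContinuousAt u z → ContinuousAt v z →
      u =ᶠ[𝓝[≠] z] v → u z = v z := by
    intro z u v hu hv huv
    exact tendsto_nhds_unique (hu.tendsto.mono_left nhdsWithin_le_nhds)
      ((hv.tendsto.mono_left nhdsWithin_le_nhds).congr' huv.symm)
  have hGg : ∀ z₀, (fun z => g z z) =ᶠ[𝓝 z₀] g z₀ := by
    intro z₀
    have h1 : ∀ᶠ w in 𝓝[≠] z₀, ∀ᶠ y in 𝓝[≠] w, F y = g z₀ y := by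
      have := eventually_eventually_nhdsWithin.mpr (hFg z₀)
      filter_upwards [this, self_mem_nhdsWithin] with w hw hw0
      have hw' : 𝓝[≠] z₀ ≤ 𝓝[≠] z₀ := le_rfl
      have : 𝓝[{z₀}ᶜ] w = 𝓝 w := IsOpen.nhdsWithin_eq isOpen_compl_singleton hw0
      rw [this] at hw
      exact hw.filter_mono nhdsWithin_le_nhds
    have h2 : ∀ᶠ w in 𝓝[≠] z₀, AnalyticAt ℂ (g z₀) w :=
      (hg z₀).eventually_analyticAt.filter_mono nhdsWithin_le_nhds
    have h3 : ∀ᶠ w in 𝓝[≠] z₀, g w w = g z₀ w := by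
      filter_upwards [h1, h2] with w h1 h2
      refine uniq w _ _ (hg w).continuousAt h2.continuousAt ?_
      filter_upwards [h1, hFg w] with y a b
      rw [← a, ← b]
    rw [eventually_nhdsWithin_iff] at h3
    filter_upwards [h3] with w hw
    by_cases h : w = z₀
    · rw [h]
    · exact hw h
  have hdiff : Differentiable ℂ (fun z => g z z) := fun z =>
    ((hg z).congr (hGg z).symm).differentiableAt
  have hperG : ∀ z, ∀ l ∈ L.lattice, g (z + l) (z + l) = g z z := by
    intro z l hl
    have ht : Tendsto (fun w => w + l) (𝓝[≠] z) (𝓝[≠] (z + l)) := by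
      refine tendsto_nhdsWithin_iff.mpr ⟨?_, ?_⟩
      · exact ((continuous_add_const l).tendsto z).mono_left nhdsWithin_le_nhds
      · filter_upwards [self_mem_nhdsWithin] with w hw
        simpa using hw
    refine uniq z (fun w => g (z + l) (w + l)) (g z) ?_ (hg z).continuousAt ?_
    · exact ContinuousAt.comp (f := fun w => w + l) (g := g (z + l)) (hg (z + l)).continuousAt (by fun_prop)
    · filter_upwards [ht.eventually (hFg (z + l)), hFg z, hper l hl z] with w a b c
      rw [← a, ← b, c]
  refine ⟨g 0 0, fun z => ?_⟩
  have hconst : ∀ w, g w w = g 0 0 := fun w =>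
    hdiff.apply_eq_apply_of_bounded (IsZLattice.isCompact_range_of_periodic L.lattice _
      hdiff.continuous fun z w hw ↦ hperG z w hw).isBounded w 0
  filter_upwards [hFg z, (hGg z).filter_mono nhdsWithin_le_nhds] with w a b
  rw [a, ← b, hconst]

set_option maxHeartbeats 1000000 in
lemma half_identity (L : PeriodPair) (z : ℂ) (hz : z ∉ L.lattice) (hzh : z + L.ω₁ / 2 ∉ L.lattice) :
    (zetaW L (z + L.ω₁ / 2) - zetaW L z - zetaW L (L.ω₁ / 2)) *
      (L.weierstrassP z - L.weierstrassP (L.ω₁ / 2)) = L.derivWeierstrassP z / 2 := by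
  set h : ℂ := L.ω₁ / 2 with hh
  have hhL : h ∉ L.lattice := L.ω₁_div_two_notMem_lattice
  have h2L : h + h ∈ L.lattice := by rw [hh, add_halves]; exact L.ω₁_mem_lattice
  set e := L.weierstrassP h with he
  have hadd : ∀ z l, l ∈ L.lattice → (z + l ∈ L.lattice ↔ z ∈ L.lattice) := fun z l hl =>
    ⟨fun h => by simpa using sub_mem h hl, fun h => add_mem h hl⟩
  have hnh : -h ∉ L.lattice := fun h' => hhL (by simpa using neg_mem h')
  have hpunct : ∀ z₀, ∀ᶠ w in 𝓝[≠] z₀, w ∉ L.lattice := by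
    intro z₀
    have := L.compl_lattice_sdiff_singleton_mem_nhds z₀
    filter_upwards [nhdsWithin_le_nhds this, self_mem_nhdsWithin] with w hw hw0 hwL
    exact hw ⟨hwL, hw0⟩
  have ht : ∀ z₀ l : ℂ, Tendsto (fun w => w + l) (𝓝[≠] z₀) (𝓝[≠] (z₀ + l)) := by
    intro z₀ l
    refine tendsto_nhdsWithin_iff.mpr ⟨?_, ?_⟩
    · exact ((continuous_add_const l).tendsto z₀).mono_left nhdsWithin_le_nhds
    · filter_upwards [self_mem_nhdsWithin] with w hw
      simpa using hw
  have hpunct2 : ∀ z₀, ∀ᶠ w in 𝓝[≠] z₀, w + h ∉ L.lattice := fun z₀ =>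
    (ht z₀ h).eventually (hpunct (z₀ + h))
  have hP' : L.derivWeierstrassP h = 0 := by
    have h1 := L.derivWeierstrassP_add_coe (-h) ⟨h + h, h2L⟩
    rw [L.derivWeierstrassP_neg] at h1
    simp only [neg_add_cancel_left] at h1
    exact CharZero.eq_neg_self_iff.mp h1
  set F : ℂ → ℂ := fun z => (zetaW L (z + h) - zetaW L z - zetaW L h) *
      (L.weierstrassP z - e) - L.derivWeierstrassP z / 2 with hFdef
  have hFper : ∀ l ∈ L.lattice, ∀ w, w ∉ L.lattice → w + h ∉ L.lattice → F (w + l) = F w := by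
    intro l hl w hw hwh
    obtain ⟨c, hc⟩ := exists_quasi L l hl
    have a := L.derivWeierstrassP_add_coe w ⟨l, hl⟩
    have b := L.weierstrassP_add_coe w ⟨l, hl⟩
    simp only at a b
    simp only [hFdef]
    rw [a, b, show w + l + h = (w + h) + l by ring, hc _ hw, hc _ hwh]
    ring
  have hFper' : ∀ l ∈ L.lattice, ∀ z, ∀ᶠ w in 𝓝[≠] z, F (w + l) = F w := by
    intro l hl z
    filter_upwards [hpunct z, hpunct2 z] with w h1 h2 using hFper l hl w h1 h2
  have hFneg : F (-z) = - F z := by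
    obtain ⟨c, hc⟩ := exists_quasi L (h + h) h2L
    have h1 := hc (-h) hnh
    rw [show -h + (h + h) = h by ring, zetaW_neg] at h1
    have h2 := hc (-(z + h)) (fun h' => hzh (by simpa using neg_mem h'))
    rw [show -(z + h) + (h + h) = -z + h by ring, zetaW_neg] at h2
    simp only [hFdef]
    rw [h2, zetaW_neg, L.weierstrassP_neg, L.derivWeierstrassP_neg]
    have : c = 2 * zetaW L h := by rw [two_mul]; nth_rw 1 [h1]; ring
    rw [this]; ring
  have hreg : ∀ z, z ∉ L.lattice → z + h ∉ L.lattice → AnalyticAt ℂ F z := by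
    intro z hz hzh
    have a1 : AnalyticAt ℂ (fun z => zetaW L (z + h)) z :=
      (analyticAt_zetaW L hzh).fun_comp (f := fun w => w + h) (by fun_prop)
    have a2 := analyticAt_zetaW L hz
    have a3 := L.analyticOnNhd_derivWeierstrassP _ hz
    have a4 := L.analyticOnNhd_weierstrassP _ hz
    simp only [hFdef]
    fun_prop
  have h00 : (0 : ℂ) ∈ ((L.lattice : Set ℂ) \ {0})ᶜ := by simp
  have hzero : ∃ g, AnalyticAt ℂ g 0 ∧ F =ᶠ[𝓝[≠] 0] g := by
    have a1 : AnalyticAt ℂ (fun z => zetaW L (z + h)) 0 :=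
      (analyticAt_zetaW L (z := 0 + h) (by simpa using hhL)).fun_comp (f := fun w => w + h) (by fun_prop)
    have a2 := analyticAt_zeta0 L h00
    have a3 := L.analyticAt_derivWeierstrassPExcept 0
    have a4 := L.analyticAt_weierstrassPExcept 0
    set k : ℂ → ℂ := fun z => zetaW L (z + h) - zetaW L h - zeta0 L z + e * z with hk
    have ak : AnalyticAt ℂ k 0 := by simp only [hk]; fun_prop
    have k0 : k 0 = 0 := by simp [hk, zeta0_zero]
    have k1 : deriv k 0 = 0 := by
      have d1 : HasDerivAt (fun z => zetaW L (z + h)) (-e) 0 := by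
        have := (hasDerivAt_zetaW L (z := 0 + h) (by simpa using hhL)).comp_add_const 0 h
        simpa using! this
      have d2 := hasDerivAt_zeta0 L h00
      have d3 : HasDerivAt (fun z : ℂ => e * z) e 0 := by
        simpa using! (hasDerivAt_id (0:ℂ)).const_mul e
      have := ((d1.sub_const (zetaW L h)).sub d2).add d3
      rw [HasDerivAt.deriv (f := k) this]; simp
    obtain ⟨k', ak', k'0, hk'⟩ := analytic_div_one ak k0
    rw [k1] at k'0
    obtain ⟨k'', ak'', -, hk''⟩ := analytic_div_one ak' k'0
    obtain ⟨p', ap', -, hp'⟩ := analytic_div_one a4 (L.weierstrassPExcept_zero 0)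
    refine ⟨fun z => k'' z - p' z + (zetaW L (z + h) - zetaW L h - zeta0 L z) *
      (L.weierstrassPExcept 0 z - e) - L.derivWeierstrassPExcept 0 z / 2, by fun_prop, ?_⟩
    filter_upwards [self_mem_nhdsWithin] with w hw
    have hw0 : w ≠ 0 := hw
    have e1 := L.weierstrassPExcept_add 0 w
    have e2 := L.derivWeierstrassPExcept_sub 0 w
    simp only [ZeroMemClass.coe_zero, sub_zero] at e1 e2
    have e3 := zetaW_eq L w
    have e4 := hk' w
    rw [hk'' w, sub_zero] at e4
    have e5 := hp' w
    rw [sub_zero] at e5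
    simp only [hFdef]
    rw [← e1, ← e2, e3]
    have e6 : zetaW L (w + h) - zetaW L h - zeta0 L w = w * (w * k'' w) - e * w := by
      rw [← e4]; simp only [hk]; ring
    have e7 : zetaW L (w + h) = w * (w * k'' w) - e * w + zetaW L h + zeta0 L w := by
      rw [← e6]; ring
    rw [e7, e5]
    field_simp
    ring
  have hmh : ∃ g, AnalyticAt ℂ g (-h) ∧ F =ᶠ[𝓝[≠] (-h)] g := by
    have a1 : AnalyticAt ℂ (fun z => zeta0 L (z + h)) (-h) :=
      (analyticAt_zeta0 L (z := -h + h) (by simp)).fun_comp (f := fun w => w + h) (by fun_prop)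
    have a2 := analyticAt_zetaW L hnh
    have a3 := L.analyticOnNhd_derivWeierstrassP _ hnh
    have a4 := L.analyticOnNhd_weierstrassP _ hnh
    obtain ⟨p', ap', -, hp'⟩ := analytic_div_one (f := fun z => L.weierstrassP z - e)
      (z₀ := -h) (by fun_prop) (by simp [he])
    refine ⟨fun z => (zeta0 L (z + h) - zetaW L z - zetaW L h) * (L.weierstrassP z - e) + p' z
      - L.derivWeierstrassP z / 2, by fun_prop, ?_⟩
    filter_upwards [self_mem_nhdsWithin] with w hw
    have hw0 : w + h ≠ 0 := fun h' => hw (by simpa using eq_neg_of_add_eq_zero_left h')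
    have e5 := hp' w
    rw [sub_neg_eq_add] at e5
    simp only [hFdef]
    rw [zetaW_eq L (w + h), e5]
    field_simp
    ring
  have htrans : ∀ z₀ l, l ∈ L.lattice → (∃ g, AnalyticAt ℂ g z₀ ∧ F =ᶠ[𝓝[≠] z₀] g) →
      ∃ g, AnalyticAt ℂ g (z₀ + l) ∧ F =ᶠ[𝓝[≠] (z₀ + l)] g := by
    rintro z₀ l hl ⟨g, hg, hFg⟩
    refine ⟨fun w => g (w + -l), ?_, ?_⟩
    · have : AnalyticAt ℂ g (z₀ + l + -l) := by simpa using hg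
      exact this.fun_comp (f := fun w => w + -l) (by fun_prop)
    · have t := ht (z₀ + l) (-l)
      rw [add_neg_cancel_right] at t
      filter_upwards [t.eventually hFg, hFper' (-l) (neg_mem hl) (z₀ + l)] with w a b
      rw [← b, a]
  obtain ⟨c, hc⟩ := liouville_aux L F (fun z₀ => by
    by_cases h1 : z₀ ∈ L.lattice
    · simpa using htrans 0 z₀ h1 hzero
    by_cases h2 : z₀ + h ∈ L.lattice
    · simpa using htrans (-h) (z₀ + h) h2 hmh
    exact ⟨F, hreg z₀ h1 h2, EventuallyEq.rfl⟩) hFper'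
  have hval : ∀ z, z ∉ L.lattice → z + h ∉ L.lattice → F z = c := by
    intro z h1 h2
    have := (hreg z h1 h2).continuousAt.tendsto.mono_left (nhdsWithin_le_nhds (s := {z}ᶜ))
    exact tendsto_nhds_unique this (tendsto_const_nhds.congr' ((hc z).mono fun w hw => hw.symm))
  have v1 := hval z hz hzh
  have v2 := hval (-z) (fun h' => hz (by simpa using neg_mem h')) (fun h' => hzh (by
    have := sub_mem h2L h'
    rwa [show h + h - (-z + h) = z + h by ring] at this))
  rw [hFneg, v1] at v2
  have c0 : c = 0 := by
    have : c + c = 0 := by nth_rw 1 [← v2]; ring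
    simpa using this
  rw [c0] at v1
  simp only [hFdef] at v1
  linear_combination v1
end

section
open Filter Topology

lemma s3sq : ((Real.sqrt 3 : ℝ) : ℂ) ^ 2 = 3 := by
  rw [← Complex.ofReal_pow, Real.sq_sqrt (by norm_num)]; norm_num

lemma tau_sq : tau ^ 2 = -1 - tau := by
  unfold tau
  linear_combination (1/4 : ℂ) * Complex.I ^ 2 * s3sq + (3/4 : ℂ) * Complex.I_sq

lemma tau_re : tau.re = -1 / 2 := by simp [tau]
lemma tau_im : tau.im = Real.sqrt 3 / 2 := by simp [tau]

lemma conj_tau : conj tau = -1 - tau := by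
  apply Complex.ext
  · simp [tau_re]; norm_num
  · simp [tau_im]

lemma mem_Eis_iff (x : ℂ) : x ∈ Eis ↔ ∃ m n : ℤ, x = m + n * tau := by
  constructor
  · intro hx
    unfold Eis at hx
    induction hx using Subring.closure_induction with
    | mem x hx => exact ⟨0, 1, by simp at hx; simp [hx]⟩
    | zero => exact ⟨0, 0, by simp⟩
    | one => exact ⟨1, 0, by simp⟩
    | add x y _ _ hx hy =>
      obtain ⟨m, n, rfl⟩ := hx
      obtain ⟨m', n', rfl⟩ := hy
      exact ⟨m + m', n + n', by push_cast; ring⟩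
    | neg x _ hx =>
      obtain ⟨m, n, rfl⟩ := hx
      exact ⟨-m, -n, by push_cast; ring⟩
    | mul x y _ _ hx hy =>
      obtain ⟨m, n, rfl⟩ := hx
      obtain ⟨m', n', rfl⟩ := hy
      exact ⟨m * m' - n * n', m * n' + n * m' - n * n', by
        push_cast; linear_combination (n * n' : ℂ) * tau_sq⟩
  · rintro ⟨m, n, rfl⟩
    exact add_mem (intCast_mem _ _) (mul_mem (intCast_mem _ _) (Subring.subset_closure rfl))

/-- The hexagonal period pair. -/
def hexPair (ω : ℝ) (hω : 0 < ω) : PeriodPair where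
  ω₁ := ω
  ω₂ := ω * tau
  indep := by
    rw [LinearIndependent.pair_iff]
    intro s t h
    have h1 := congrArg Complex.re h
    have h2 := congrArg Complex.im h
    simp [tau_re, tau_im, hω.ne'] at h1 h2
    subst h2
    simpa [hω.ne'] using h1

lemma hex_mem (ω : ℝ) (hω : 0 < ω) (z : ℂ) :
    z ∈ (hexPair ω hω).lattice ↔ ∃ m n : ℤ, z = ω * (m + n * tau) := by
  rw [PeriodPair.mem_lattice]
  simp only [hexPair]
  constructor
  · rintro ⟨m, n, h⟩; exact ⟨m, n, by rw [← h]; ring⟩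
  · rintro ⟨m, n, h⟩; exact ⟨m, n, by rw [h]; ring⟩

lemma hex_inLattice (ω : ℝ) (hω : 0 < ω) (z : ℂ) :
    inLattice ω z ↔ z ∈ (hexPair ω hω).lattice := by
  rw [hex_mem]
  unfold inLattice
  constructor
  · rintro ⟨⟨a, ha⟩, h⟩
    obtain ⟨m, n, rfl⟩ := (mem_Eis_iff a).mp ha
    exact ⟨m, n, h⟩
  · rintro ⟨m, n, h⟩
    exact ⟨⟨_, (mem_Eis_iff _).mpr ⟨m, n, rfl⟩⟩, h⟩

lemma wp_eq (ω : ℝ) (hω : 0 < ω) : wp ω = (hexPair ω hω).weierstrassP := by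
  funext z
  have h1 := (hexPair ω hω).weierstrassPExcept_add 0 z
  simp only [ZeroMemClass.coe_zero, sub_zero] at h1
  rw [← h1]
  unfold wp PeriodPair.weierstrassPExcept
  have a := tsum_subtype {w : ℂ | inLattice ω w ∧ w ≠ 0} (fun a => 1 / (z - a) ^ 2 - 1 / a ^ 2)
  have b := tsum_subtype ((hexPair ω hω).lattice : Set ℂ)
    (fun a => if a = 0 then 0 else 1 / (z - a) ^ 2 - 1 / a ^ 2)
  have e : Set.indicator {w : ℂ | inLattice ω w ∧ w ≠ 0} (fun a => 1 / (z - a) ^ 2 - 1 / a ^ 2)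
    = Set.indicator ((hexPair ω hω).lattice : Set ℂ)
    (fun a => if a = 0 then 0 else 1 / (z - a) ^ 2 - 1 / a ^ 2) := by
    ext w
    by_cases h1 : w ∈ (hexPair ω hω).lattice <;> by_cases h2 : w = 0 <;>
      simp [Set.indicator, hex_inLattice ω hω, h1, h2]
  rw [e] at a
  have c := a.trans b.symm
  rw [add_comm]
  simp only [ne_eq, OfNat.ofNat_ne_zero, not_false_eq_true, zero_pow, div_zero, sub_zero]
  congr 1

section
variable (ω : ℝ) (hω : 0 < ω)

/-- multiplication by tau on the lattice -/
def tauEquiv : (hexPair ω hω).lattice ≃ (hexPair ω hω).lattice where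
  toFun l := ⟨tau * l, by
    obtain ⟨m, n, h⟩ := (hex_mem ω hω _).mp l.2
    refine (hex_mem ω hω _).mpr ⟨-n, m - n, ?_⟩
    rw [h]; push_cast; linear_combination (ω * n : ℂ) * tau_sq⟩
  invFun l := ⟨(-1 - tau) * l, by
    obtain ⟨m, n, h⟩ := (hex_mem ω hω _).mp l.2
    refine (hex_mem ω hω _).mpr ⟨n - m, -m, ?_⟩
    rw [h]; push_cast; linear_combination -(ω * n : ℂ) * tau_sq⟩
  left_inv l := by ext; simp only; linear_combination -(l : ℂ) * tau_sq
  right_inv l := by ext; simp only; linear_combination -(l : ℂ) * tau_sq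

/-- conjugation on the lattice -/
def conjEquiv : (hexPair ω hω).lattice ≃ (hexPair ω hω).lattice :=
  have key : ∀ l : (hexPair ω hω).lattice, conj (l : ℂ) ∈ (hexPair ω hω).lattice := fun l => by
    obtain ⟨m, n, h⟩ := (hex_mem ω hω _).mp l.2
    refine (hex_mem ω hω _).mpr ⟨m - n, -n, ?_⟩
    rw [h]; simp only [map_mul, map_add, map_intCast, conj_ofReal, conj_tau]; push_cast; ring
  { toFun := fun l => ⟨conj (l : ℂ), key l⟩
    invFun := fun l => ⟨conj (l : ℂ), key l⟩
    left_inv := fun l => by ext; simp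
    right_inv := fun l => by ext; simp }

lemma tau_ne : tau ≠ 0 := by
  intro h; have := tau_sq; rw [h] at this; norm_num at this

lemma tau_cube : tau ^ 3 = 1 := by linear_combination (tau - 1) * tau_sq

lemma wp_tau (z : ℂ) : (hexPair ω hω).weierstrassP (tau * z) = tau * (hexPair ω hω).weierstrassP z := by
  unfold PeriodPair.weierstrassP
  rw [← (tauEquiv ω hω).tsum_eq, ← tsum_mul_left]
  congr with l
  simp only [tauEquiv, Equiv.coe_fn_mk]
  rw [← mul_sub, mul_pow, mul_pow]
  have h : ∀ x : ℂ, 1 / (tau ^ 2 * x) = tau * (1 / x) := by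
    intro x
    rw [one_div, mul_inv, one_div]
    congr 1
    rw [inv_eq_iff_eq_inv, eq_comm, inv_eq_iff_eq_inv, ← mul_eq_one_iff_eq_inv₀ (pow_ne_zero _ tau_ne)]
    linear_combination tau_cube
  rw [h, h]; ring

lemma zeta_tau (z : ℂ) : zetaW (hexPair ω hω) (tau * z) = tau ^ 2 * zetaW (hexPair ω hω) z := by
  unfold zetaW
  rw [← (tauEquiv ω hω).tsum_eq, ← tsum_mul_left]
  congr with l
  simp only [tauEquiv, Equiv.coe_fn_mk]
  rw [← mul_sub, mul_pow]
  have hi : tau⁻¹ = tau ^ 2 := by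
    rw [inv_eq_iff_eq_inv, ← mul_eq_one_iff_eq_inv₀ (pow_ne_zero _ tau_ne)]
    linear_combination tau_cube
  rw [one_div, one_div, one_div, one_div, mul_inv, mul_inv, hi, div_eq_mul_inv, div_eq_mul_inv,
    mul_inv, ← inv_pow, hi]
  linear_combination tau ^ 2 * z * ((l : ℂ) ^ 2)⁻¹ * tau_cube

lemma wp_conj (z : ℂ) : (hexPair ω hω).weierstrassP (conj z) = conj ((hexPair ω hω).weierstrassP z) := by
  unfold PeriodPair.weierstrassP
  rw [Complex.conj_tsum, ← (conjEquiv ω hω).tsum_eq]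
  congr with l
  simp [conjEquiv]
end
end

section
open Filter Topology

section
variable (ω : ℝ) (hω : 0 < ω)

lemma hex_mem_re_im (z : ℂ) (hz : z ∈ (hexPair ω hω).lattice) :
    ∃ m n : ℤ, z.re = ω * (m - n / 2) ∧ z.im = ω * (n * Real.sqrt 3 / 2) := by
  obtain ⟨m, n, h⟩ := (hex_mem ω hω _).mp hz
  refine ⟨m, n, ?_, ?_⟩
  · rw [h]; simp [tau_re]; left; ring
  · rw [h]; simp [tau_im]; left; ring

lemma imag_notMem (t : ℝ) (h0 : 0 < t) (h1 : t < Real.sqrt 3 * ω) :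
    (t : ℂ) * I ∉ (hexPair ω hω).lattice := by
  intro h
  obtain ⟨m, n, hr, hi⟩ := hex_mem_re_im ω hω _ h
  simp at hr hi
  have hs : 0 < Real.sqrt 3 := by positivity
  have h2 : (n : ℝ) = 2 * m := by
    rcases hr with hr | hr
    · exact absurd hr hω.ne'
    · linarith
  rw [h2] at hi
  have h3 : t = m * (Real.sqrt 3 * ω) := by rw [hi]; ring
  have hp : 0 < Real.sqrt 3 * ω := by positivity
  rw [h3] at h0 h1
  have a : (0 : ℝ) < m := by
    by_contra hc; push Not at hc; nlinarith
  have b : (m : ℝ) < 1 := by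
    by_contra hc; push Not at hc; nlinarith
  have a' : (0 : ℤ) < m := by exact_mod_cast a
  have b' : m < (1 : ℤ) := by exact_mod_cast b
  omega

/-- the 3-torsion point -/
def vpt : ℂ := ((ω / Real.sqrt 3 : ℝ) : ℂ) * I

lemma vpt_notMem : vpt ω ∉ (hexPair ω hω).lattice := by
  apply imag_notMem
  · positivity
  · have h3 : (0:ℝ) < Real.sqrt 3 := by positivity
    rw [div_lt_iff₀ h3]
    nlinarith [Real.mul_self_sqrt (show (0:ℝ) ≤ 3 by norm_num)]

lemma vpt_s3 : vpt ω * Real.sqrt 3 = ω * I := by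
  unfold vpt
  have : ((Real.sqrt 3 : ℝ) : ℂ) ≠ 0 := by
    simp
  push_cast
  field_simp

lemma s3_ne : ((Real.sqrt 3 : ℝ) : ℂ) ≠ 0 := by simp

/-- τ v = v + l -/
lemma tau_vpt : tau * vpt ω = vpt ω + ω * ((-1 : ℤ) + (-1 : ℤ) * tau) := by
  have h := vpt_s3 ω
  have h2 : vpt ω = ω * I * Real.sqrt 3 / 3 := by
    rw [← h]; linear_combination -(vpt ω / 3) * s3sq
  rw [h2]
  unfold tau
  push_cast
  linear_combination (ω * I ^ 2 / 6 : ℂ) * s3sq + (ω / 2 : ℂ) * I_sq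

lemma ode' (hODE : ∀ z : ℂ, ¬ inLattice ω z → deriv (wp ω) z ^ 2 = 4 * wp ω z ^ 3 - 1)
    (z : ℂ) (hz : z ∉ (hexPair ω hω).lattice) :
    (hexPair ω hω).derivWeierstrassP z ^ 2 = 4 * (hexPair ω hω).weierstrassP z ^ 3 - 1 := by
  have := hODE z (by rwa [hex_inLattice ω hω])
  rw [wp_eq ω hω, PeriodPair.deriv_weierstrassP] at this
  exact this

lemma wp_vpt : (hexPair ω hω).weierstrassP (vpt ω) = 0 := by
  have h1 := wp_tau ω hω (vpt ω)
  have h2 : (ω : ℂ) * ((-1 : ℤ) + (-1 : ℤ) * tau) ∈ (hexPair ω hω).lattice :=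
    (hex_mem ω hω _).mpr ⟨-1, -1, rfl⟩
  have h3 := (hexPair ω hω).weierstrassP_add_coe (vpt ω) ⟨_, h2⟩
  simp only at h3
  rw [← tau_vpt, h1] at h3
  have h4 : (tau - 1) * (hexPair ω hω).weierstrassP (vpt ω) = 0 := by linear_combination h3
  rcases mul_eq_zero.mp h4 with h | h
  · exfalso
    have := congrArg Complex.re h
    simp [tau_re] at this
    norm_num at this
  · exact h

lemma wp'_vpt_sq (hODE : ∀ z : ℂ, ¬ inLattice ω z → deriv (wp ω) z ^ 2 = 4 * wp ω z ^ 3 - 1)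
    : (hexPair ω hω).derivWeierstrassP (vpt ω) ^ 2 = -1 := by
  rw [ode' ω hω hODE _ (vpt_notMem ω hω), wp_vpt]; norm_num

lemma wp_second (hODE : ∀ z : ℂ, ¬ inLattice ω z → deriv (wp ω) z ^ 2 = 4 * wp ω z ^ 3 - 1)
    (z : ℂ) (hz : z ∉ (hexPair ω hω).lattice) :
    deriv (hexPair ω hω).derivWeierstrassP z = 6 * (hexPair ω hω).weierstrassP z ^ 2 := by
  set L := hexPair ω hω
  have a1 := L.analyticOnNhd_derivWeierstrassP
  have a2 := L.analyticOnNhd_weierstrassP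
  have hmul : ∀ z ∈ (L.lattice : Set ℂ)ᶜ, L.derivWeierstrassP z *
      (deriv L.derivWeierstrassP z - 6 * L.weierstrassP z ^ 2) = 0 := by
    intro z hz
    have d1 : HasDerivAt L.derivWeierstrassP (deriv L.derivWeierstrassP z) z :=
      (a1 z hz).differentiableAt.hasDerivAt
    have d2 : HasDerivAt L.weierstrassP (L.derivWeierstrassP z) z := by
      rw [← L.deriv_weierstrassP]
      exact (a2 z hz).differentiableAt.hasDerivAt
    have e1 := d1.fun_pow 2
    have e2 := ((d2.fun_pow 3).const_mul 4).sub_const 1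
    have e3 := e1.congr_of_eventuallyEq (f₁ := fun z => 4 * L.weierstrassP z ^ 3 - 1) (by
      filter_upwards [L.isClosed_lattice.isOpen_compl.mem_nhds hz] with w hw
      exact (ode' ω hω hODE w hw).symm)
    have := e3.unique e2
    simp at this
    linear_combination this / 2
  rcases AnalyticOnNhd.eq_zero_or_eq_zero_of_mul_eq_zero a1 (g := fun z =>
      deriv L.derivWeierstrassP z - 6 * L.weierstrassP z ^ 2)
      (a1.deriv.sub (analyticOnNhd_const.mul (a2.pow 2))) hmul (lattice_compl_preconn L) with h | h
  · exfalso
    have h1 := h _ (vpt_notMem ω hω)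
    have h2 := wp'_vpt_sq ω hω hODE
    rw [h1] at h2
    norm_num at h2
  · have := h z hz
    linear_combination this

lemma wp'_vpt (hODE : ∀ z : ℂ, ¬ inLattice ω z → deriv (wp ω) z ^ 2 = 4 * wp ω z ^ 3 - 1)
    : (hexPair ω hω).derivWeierstrassP (vpt ω) = - I := by
  set L := hexPair ω hω with hL
  have hs : 0 < Real.sqrt 3 := by positivity
  have hss := Real.mul_self_sqrt (show (0:ℝ) ≤ 3 by norm_num)
  set D : ℝ → ℝ := fun t => (I * L.derivWeierstrassP (t * I)).re with hD
  have hreal : ∀ t : ℝ, (L.weierstrassP (t * I)).im = 0 := by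
    intro t
    have := wp_conj ω hω (t * I)
    rw [map_mul, conj_ofReal, conj_I, mul_neg, PeriodPair.weierstrassP_neg] at this
    exact Complex.conj_eq_iff_im.mp this.symm
  have hder : ∀ t : ℝ, 0 < t → t < Real.sqrt 3 * ω →
      HasDerivAt D (-6 * (L.weierstrassP (t * I)).re ^ 2) t := by
    intro t h0 h1
    have hm := imag_notMem ω hω t h0 h1
    have d1 : HasDerivAt L.derivWeierstrassP (6 * L.weierstrassP (t * I) ^ 2) (t * I) := by
      rw [← wp_second ω hω hODE _ hm]
      exact (L.analyticOnNhd_derivWeierstrassP _ hm).differentiableAt.hasDerivAt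
    have d2 : HasDerivAt (fun z : ℂ => I * L.derivWeierstrassP (z * I))
        (I * (6 * L.weierstrassP (t * I) ^ 2 * I)) (t : ℂ) := by
      have d3 : HasDerivAt (fun z : ℂ => z * I) I (t : ℂ) := by
        simpa using! (hasDerivAt_id (t : ℂ)).mul_const I
      exact (HasDerivAt.comp (t : ℂ) (h := fun z : ℂ => z * I) d1 d3).const_mul I
    have d4 := d2.real_of_complex
    convert! d4 using 1
    have : L.weierstrassP (t * I) = ((L.weierstrassP (t * I)).re : ℂ) := by
      apply Complex.ext <;> simp [hreal]
    rw [this]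
    rw [show I * (6 * ((L.weierstrassP (t * I)).re : ℂ) ^ 2 * I) =
      ((-6 * (L.weierstrassP (t * I)).re ^ 2 : ℝ) : ℂ) by
        push_cast; linear_combination 6 * ((L.weierstrassP (t * I)).re : ℂ) ^ 2 * I_sq]
    rw [Complex.ofReal_re, Complex.ofReal_re]
  have hT : D (Real.sqrt 3 * ω / 2) = 0 := by
    have hm : (((Real.sqrt 3 * ω / 2 : ℝ) : ℂ) * I) + (((Real.sqrt 3 * ω / 2 : ℝ) : ℂ) * I) ∈ L.lattice := by
      refine (hex_mem ω hω _).mpr ⟨1, 2, ?_⟩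
      unfold tau; push_cast; ring
    set x := (((Real.sqrt 3 * ω / 2 : ℝ) : ℂ) * I)
    have h1 := L.derivWeierstrassP_add_coe (-x) ⟨_, hm⟩
    rw [L.derivWeierstrassP_neg] at h1
    simp only [neg_add_cancel_left] at h1
    have : L.derivWeierstrassP x = 0 := CharZero.eq_neg_self_iff.mp h1
    simp only [hD]
    rw [this]; simp
  have hlt : ω / Real.sqrt 3 < Real.sqrt 3 * ω / 2 := by
    rw [div_lt_iff₀ hs]; nlinarith
  have hanti : AntitoneOn D (Set.Icc (ω / Real.sqrt 3) (Real.sqrt 3 * ω / 2)) := by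
    have hp : 0 < ω / Real.sqrt 3 := by positivity
    have hq : 0 < Real.sqrt 3 * ω := by positivity
    have hder' : ∀ t ∈ Set.Icc (ω / Real.sqrt 3) (Real.sqrt 3 * ω / 2),
      HasDerivAt D (-6 * (L.weierstrassP (t * I)).re ^ 2) t := fun t ht =>
        hder t (lt_of_lt_of_le hp ht.1) (lt_of_le_of_lt ht.2 (by linarith))
    apply antitoneOn_of_deriv_nonpos (convex_Icc _ _)
    · exact fun t ht => (hder' t ht).continuousAt.continuousWithinAt
    · exact fun t ht => (hder' t (interior_subset ht)).differentiableAt.differentiableWithinAt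
    · intro t ht
      rw [(hder' t (interior_subset ht)).deriv]
      nlinarith [sq_nonneg (L.weierstrassP (t * I)).re]
  have hge := hanti (Set.left_mem_Icc.mpr hlt.le) (Set.right_mem_Icc.mpr hlt.le) hlt.le
  rw [hT] at hge
  have hsq := wp'_vpt_sq ω hω hODE
  rw [← I_sq, sq_eq_sq_iff_eq_or_eq_neg] at hsq
  rcases hsq with h | h
  · exfalso
    have : D (ω / Real.sqrt 3) = -1 := by
      simp only [hD]
      rw [show (((ω / Real.sqrt 3 : ℝ) : ℂ) * I) = vpt ω from rfl, h]; simp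
    linarith
  · exact h

lemma wp_half (hODE : ∀ z : ℂ, ¬ inLattice ω z → deriv (wp ω) z ^ 2 = 4 * wp ω z ^ 3 - 1)
    : (hexPair ω hω).weierstrassP (ω / 2) * cbrt4 = 1 := by
  set L := hexPair ω hω with hL
  have hm : (ω / 2 : ℂ) ∉ L.lattice := L.ω₁_div_two_notMem_lattice
  have hP' : L.derivWeierstrassP (ω / 2) = 0 := by
    have h1 := L.derivWeierstrassP_add_coe (-(ω / 2)) ⟨_, L.ω₁_mem_lattice⟩
    rw [L.derivWeierstrassP_neg, show -((ω : ℂ) / 2) + L.ω₁ = ω / 2 by simp [hL, hexPair]; ring] at h1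
    exact CharZero.eq_neg_self_iff.mp h1
  have h1 := ode' ω hω hODE _ hm
  rw [← hL, hP'] at h1
  have him : (L.weierstrassP (ω / 2)).im = 0 := by
    have := wp_conj ω hω (ω / 2)
    rw [map_div₀, conj_ofReal, map_ofNat] at this
    exact Complex.conj_eq_iff_im.mp this.symm
  have hre : L.weierstrassP (ω / 2) = ((L.weierstrassP (ω / 2)).re : ℂ) := by
    apply Complex.ext <;> simp [him]
  set x := (L.weierstrassP (ω / 2)).re
  rw [hre] at h1 ⊢
  have h2 : 4 * x ^ 3 = 1 := by
    have : (4 * x ^ 3 - 1 : ℂ) = 0 := by rw [← h1]; norm_num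
    have h3 : ((4 * x ^ 3 - 1 : ℝ) : ℂ) = 0 := by push_cast; exact this
    have := Complex.ofReal_eq_zero.mp h3
    linarith
  have hc : ((4 : ℝ) ^ ((1 : ℝ) / 3)) ^ 3 = 4 := by
    rw [← Real.rpow_natCast, ← Real.rpow_mul (by norm_num)]; norm_num
  unfold cbrt4
  rw [← Complex.ofReal_mul]
  have h4 : (x * (4 : ℝ) ^ ((1 : ℝ) / 3)) ^ 3 = 1 ^ 3 := by
    rw [mul_pow, hc]; linarith
  have h5 := (Odd.strictMono_pow (by decide : Odd 3)).injective h4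
  rw [h5]; simp
end
end

section
open Filter Topology

lemma notMem_add (L : PeriodPair) {z l : ℂ} (hz : z ∉ L.lattice) (hl : l ∈ L.lattice) :
    z + l ∉ L.lattice := fun h => hz (by simpa using sub_mem h hl)

lemma notMem_sub (L : PeriodPair) {z l : ℂ} (hz : z ∉ L.lattice) (hl : l ∈ L.lattice) :
    z - l ∉ L.lattice := fun h => hz (by simpa using add_mem h hl)

/-- the 6-torsion point -/
def ppt (ω : ℝ) : ℂ := ω / (2 * Real.sqrt 3 * I)

lemma ppt_eq (ω : ℝ) : ppt ω = vpt ω + ω / 2 - ω - ω * tau := by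
  have h2 : vpt ω = ω * I * Real.sqrt 3 / 3 := by
    rw [← vpt_s3]; linear_combination -(vpt ω / 3) * s3sq
  rw [h2]
  unfold ppt tau
  have := s3_ne
  have h3 : (2 * Real.sqrt 3 * I : ℂ) ≠ 0 := by simp
  rw [div_eq_iff h3]
  linear_combination (ω / 3 * I ^ 2 : ℂ) * s3sq + (ω : ℂ) * I_sq

lemma ppt_six (ω : ℝ) : 7 * ppt ω = ppt ω - ω - ω * tau - ω * tau := by
  have h2 : vpt ω = ω * I * Real.sqrt 3 / 3 := by
    rw [← vpt_s3]; linear_combination -(vpt ω / 3) * s3sq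
  rw [ppt_eq, h2]
  unfold tau
  ring

lemma ppt_notMem (ω : ℝ) (hω : 0 < ω) : ppt ω ∉ (hexPair ω hω).lattice := by
  intro h
  have h1 := neg_mem h
  refine imag_notMem ω hω (ω / (2 * Real.sqrt 3)) (by positivity) ?_ ?_
  · have h3 : (0:ℝ) < Real.sqrt 3 := by positivity
    rw [div_lt_iff₀ (by positivity)]
    nlinarith [Real.mul_self_sqrt (show (0:ℝ) ≤ 3 by norm_num)]
  · convert h1 using 1
    unfold ppt
    push_cast
    have := s3_ne
    field_simp
    simp

lemma zeta_comb (ω : ℝ) (hω : 0 < ω)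
    (hODE : ∀ z : ℂ, ¬ inLattice ω z → deriv (wp ω) z ^ 2 = 4 * wp ω z ^ 3 - 1) :
    7 * zetaW (hexPair ω hω) (ppt ω) - zetaW (hexPair ω hω) (7 * ppt ω) = 3 * I * cbrt4 := by
  set L := hexPair ω hω with hL
  have m1 : (ω : ℂ) ∈ L.lattice := (hex_mem ω hω _).mpr ⟨1, 0, by simp⟩
  have m2 : (ω * tau : ℂ) ∈ L.lattice := (hex_mem ω hω _).mpr ⟨0, 1, by simp⟩
  obtain ⟨η, q1⟩ := exists_quasi L _ m1
  have q2 : ∀ z ∉ L.lattice, zetaW L (z + ω * tau) = zetaW L z + tau ^ 2 * η := by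
    intro z hz
    have hz' : tau ^ 2 * z ∉ L.lattice := by
      intro h
      obtain ⟨m, n, hh⟩ := (hex_mem ω hω _).mp h
      refine hz ((hex_mem ω hω _).mpr ⟨-n, m - n, ?_⟩)
      have : z = tau * (tau ^ 2 * z) := by linear_combination -z * tau_cube
      rw [this, hh]
      push_cast
      linear_combination ω * n * tau_sq
    have h1 := zeta_tau ω hω (tau ^ 2 * z + ω)
    have h2 := zeta_tau ω hω (tau ^ 2 * z)
    rw [← hL] at h1 h2
    rw [q1 _ hz', show tau * (tau ^ 2 * z + ω) = z + ω * tau by linear_combination z * tau_cube] at h1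
    rw [show tau * (tau ^ 2 * z) = z by linear_combination z * tau_cube] at h2
    rw [h1, h2]; ring
  have q1' : ∀ z ∉ L.lattice, zetaW L (z - ω) = zetaW L z - η := by
    intro z hz
    have := q1 _ (notMem_sub L hz m1)
    rw [sub_add_cancel] at this
    rw [this]; ring
  have q2' : ∀ z ∉ L.lattice, zetaW L (z - ω * tau) = zetaW L z - tau ^ 2 * η := by
    intro z hz
    have := q2 _ (notMem_sub L hz m2)
    rw [sub_add_cancel] at this
    rw [this]; ring
  have hh : zetaW L (ω / 2) = η / 2 := by
    have hm : (ω / 2 : ℂ) ∉ L.lattice := L.ω₁_div_two_notMem_lattice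
    have h1 := q1' _ hm
    rw [show (ω / 2 - ω : ℂ) = -(ω / 2) by ring, zetaW_neg] at h1
    linear_combination -h1 / 2
  have nv : vpt ω ∉ L.lattice := vpt_notMem ω hω
  have np : ppt ω ∉ L.lattice := ppt_notMem ω hω
  have nvh : vpt ω + ω / 2 ∉ L.lattice := by
    have := notMem_add L (notMem_add L np m1) m2
    rw [ppt_eq] at this
    convert this using 1; ring
  have hv : tau ^ 2 * zetaW L (vpt ω) = zetaW L (vpt ω) - η - tau ^ 2 * η := by
    have h1 := zeta_tau ω hω (vpt ω)
    rw [← hL, tau_vpt] at h1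
    rw [← h1, ← q1' _ nv, ← q2' _ (notMem_sub L nv m1)]
    congr 1; push_cast; ring
  have hP : zetaW L (ppt ω) = zetaW L (vpt ω + ω / 2) - η - tau ^ 2 * η := by
    rw [ppt_eq, q2' _ (notMem_sub L nvh m1), q1' _ nvh]
  have h7 : zetaW L (7 * ppt ω) = zetaW L (ppt ω) - η - tau ^ 2 * η - tau ^ 2 * η := by
    rw [ppt_six, q2' _ (notMem_sub L (notMem_sub L np m1) m2), q2' _ (notMem_sub L np m1), q1' _ np]
  have hid := half_identity L (vpt ω) nv nvh
  rw [wp'_vpt ω hω hODE, wp_vpt ω hω, show L.ω₁ = ω from rfl, hh] at hid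
  have he := wp_half ω hω hODE
  rw [← hL] at he
  set e := L.weierstrassP (ω / 2)
  have hD : zetaW L (vpt ω + ω / 2) = zetaW L (vpt ω) + η / 2 + I * cbrt4 / 2 := by
    linear_combination -cbrt4 * hid - (zetaW L (vpt ω + ω / 2) - zetaW L (vpt ω) - η / 2) * he
  rw [h7, hP, hD]
  have hne : (tau ^ 2 - 1) ≠ 0 := by
    intro h
    have : tau = - 2 := by linear_combination tau_sq - h
    have := congrArg Complex.im this
    simp [tau_im] at this
  have hz : zetaW L (vpt ω) = η * (1 + 2 * tau ^ 2) / 3 := by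
    apply mul_left_cancel₀ hne
    linear_combination hv - (2 * η / 3) * (1 - tau + tau ^ 2) * tau_sq
  rw [hz]; ring

/-- symmetrised sum -/
lemma hasSum_lattice_comb (ω : ℝ) (hω : 0 < ω)
    (hODE : ∀ z : ℂ, ¬ inLattice ω z → deriv (wp ω) z ^ 2 = 4 * wp ω z ^ 3 - 1) :
    HasSum (fun l : (hexPair ω hω).lattice => 7 * (1 / (ppt ω - l) + 1 / (ppt ω + l))
      - (1 / (7 * ppt ω - l) + 1 / (7 * ppt ω + l))) (6 * I * cbrt4) := by
  set L := hexPair ω hω with hL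
  have key : ∀ z : ℂ, HasSum (fun l : L.lattice => 1 / (z - l) + 1 / (z + l) + 2 * z / (l : ℂ) ^ 2)
      (2 * zetaW L z) := by
    intro z
    have h1 := hasSum_zetaW L z
    have h2 := (hasSum_zetaW L (-z)).neg
    rw [zetaW_neg, neg_neg] at h2
    have h3 := h1.add h2
    rw [← two_mul] at h3
    convert! h3 using 2 with l
    rw [show (-z - (l : ℂ)) = -(z + l) by ring, div_neg]
    ring
  have h := ((key (ppt ω)).mul_left 7).sub (key (7 * ppt ω))
  have h0 := zeta_comb ω hω hODE
  rw [show 7 * (2 * zetaW L (ppt ω)) - 2 * zetaW L (7 * ppt ω) = 6 * I * cbrt4 by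
    linear_combination 2 * h0] at h
  convert! h using 2 with l
  ring

/-- The sum over `ℤ²`. -/
lemma hasSum_comb (ω : ℝ) (hω : 0 < ω)
    (hODE : ∀ z : ℂ, ¬ inLattice ω z → deriv (wp ω) z ^ 2 = 4 * wp ω z ^ 3 - 1) :
    HasSum (fun k : ℤ × ℤ =>
      7 * (1 / (2 * Real.sqrt 3 * I * (k.1 + k.2 * tau) + 1) -
        1 / (2 * Real.sqrt 3 * I * (k.1 + k.2 * tau) - 1))
      - (1 / (2 * Real.sqrt 3 * I * (k.1 + k.2 * tau) + 7) -
        1 / (2 * Real.sqrt 3 * I * (k.1 + k.2 * tau) - 7)))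
      (ω / (4 * Real.sqrt 3) * 12 * cbrt4) := by
  have h := ((hasSum_lattice_comb ω hω hODE).mul_left (ppt ω))
  rw [← (hexPair ω hω).latticeEquivProd.symm.toEquiv.hasSum_iff] at h
  have hp : ppt ω ≠ 0 := fun h0 => ppt_notMem ω hω (by rw [h0]; exact zero_mem _)
  have hd : (2 * Real.sqrt 3 * I : ℂ) ≠ 0 := by simp
  have hpe : ppt ω * (2 * Real.sqrt 3 * I) = ω := by unfold ppt; field_simp
  convert! h using 1
  · ext k
    simp only [Function.comp]
    have he : (((hexPair ω hω).latticeEquivProd.symm.toEquiv k : (hexPair ω hω).lattice) : ℂ) =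
        ppt ω * (2 * Real.sqrt 3 * I * (k.1 + k.2 * tau)) := by
      rw [← mul_assoc, hpe]
      have := (hexPair ω hω).latticeEquiv_symm_apply k
      refine this.trans ?_
      simp only [hexPair]
      ring
    rw [he]
    set x := (2 * Real.sqrt 3 * I * (k.1 + k.2 * tau) : ℂ)
    have e1 : ∀ a : ℂ, ppt ω * (1 / (a * ppt ω - ppt ω * x)) = - (1 / (x - a)) := by
      intro a
      rw [show a * ppt ω - ppt ω * x = -(ppt ω * (x - a)) by ring, one_div, one_div,
        inv_neg, mul_inv, mul_neg, mul_inv_cancel_left₀ hp]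
    have e2 : ∀ a : ℂ, ppt ω * (1 / (a * ppt ω + ppt ω * x)) = (1 / (x + a)) := by
      intro a
      rw [show a * ppt ω + ppt ω * x = (ppt ω * (x + a)) by ring, one_div, one_div,
        mul_inv, mul_inv_cancel_left₀ hp]
    have a1 := e1 1
    have a2 := e2 1
    rw [one_mul] at a1 a2
    linear_combination -7 * a1 - 7 * a2 + e1 7 + e2 7
  · unfold ppt
    have := s3_ne
    have := I_ne_zero
    field_simp
    ring
end

section
open Filter Topology

def fS (s w : ℂ) : ℂ := conj w * ((normSq w : ℝ) : ℂ) ^ (-s)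

lemma fS_one (w : ℂ) : fS 1 w = 1 / w := by
  unfold fS
  rw [cpow_neg_one, one_div, Complex.inv_def w]
  push_cast; rfl

lemma fS_neg (s w : ℂ) : fS s (-w) = - fS s w := by
  unfold fS; simp

lemma norm_fS (s w : ℂ) (hw : w ≠ 0) : ‖fS s w‖ = ‖w‖ ^ (1 - 2 * s.re) := by
  have h : 0 < ‖w‖ := norm_pos_iff.mpr hw
  unfold fS
  rw [norm_mul, norm_conj, norm_cpow_eq_rpow_re_of_pos (normSq_pos.mpr hw), normSq_eq_norm_sq,
    ← Real.rpow_natCast, ← Real.rpow_mul h.le, sub_eq_add_neg, Real.rpow_add h, Real.rpow_one]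
  congr 2
  simp

/-- complexified version along real direction -/
lemma fS_real (s l : ℂ) (x : ℝ) : fS s (l + x) =
    (conj l + x) * (((l.re : ℂ) + x) ^ 2 + (l.im : ℂ) ^ 2) ^ (-s) := by
  unfold fS
  simp only [map_add, conj_ofReal]
  congr 2
  rw [normSq_apply]; simp; ring

def qS (l z : ℂ) : ℂ := ((l.re : ℂ) + z) ^ 2 + (l.im : ℂ) ^ 2

lemma qS_real (l : ℂ) (x : ℝ) : qS l x = ((‖l + x‖ ^ 2 : ℝ) : ℂ) := by
  rw [← normSq_eq_norm_sq, normSq_apply]; unfold qS; simp; ring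

lemma hasDerivAt_qS (l z : ℂ) : HasDerivAt (qS l) (2 * (l.re + z)) z := by
  unfold qS
  have h := (((hasDerivAt_id z).const_add (l.re : ℂ)).fun_pow 2).add_const ((l.im : ℂ) ^ 2)
  convert! h using 1
  simp

lemma hasDerivAt_qS_cpow (l c : ℂ) (x : ℝ) (hx : l + x ≠ 0) :
    HasDerivAt (fun z => qS l z ^ c) (c * qS l x ^ (c - 1) * (2 * (l.re + x))) (x : ℂ) := by
  apply (hasDerivAt_qS l x).cpow_const
  rw [qS_real]
  rw [ofReal_mem_slitPlane]
  have : 0 < ‖l + x‖ := norm_pos_iff.mpr hx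
  positivity

def g0 (s l z : ℂ) : ℂ := (conj l + z) * qS l z ^ (-s)
def g1 (s l z : ℂ) : ℂ := qS l z ^ (-s) + (-s) * (2 * ((conj l + z) * ((l.re + z) * qS l z ^ (-s - 1))))
def g2 (s l z : ℂ) : ℂ := (-s) * qS l z ^ (-s - 1) * (2 * (l.re + z)) +
   (-s) * (2 * ((l.re + z) * qS l z ^ (-s - 1) +
     (conj l + z) * (qS l z ^ (-s - 1) + (l.re + z) * ((-s - 1) * qS l z ^ (-s - 1 - 1) * (2 * (l.re + z))))))

lemma hasDerivAt_g0 (s l : ℂ) (x : ℝ) (hx : l + x ≠ 0) :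
    HasDerivAt (fun y : ℝ => g0 s l y) (g1 s l x) x := by
  apply HasDerivAt.comp_ofReal (e := g0 s l)
  unfold g0 g1
  convert! ((hasDerivAt_id (x : ℂ)).const_add (conj l)).mul (hasDerivAt_qS_cpow l (-s) x hx) using 1
  simp; ring

lemma hasDerivAt_g1 (s l : ℂ) (x : ℝ) (hx : l + x ≠ 0) :
    HasDerivAt (fun y : ℝ => g1 s l y) (g2 s l x) x := by
  apply HasDerivAt.comp_ofReal (e := g1 s l)
  unfold g1 g2
  have a1 := ((hasDerivAt_id (x : ℂ)).const_add (conj l))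
  have a2 := ((hasDerivAt_id (x : ℂ)).const_add (l.re : ℂ))
  convert! (hasDerivAt_qS_cpow l (-s) x hx).add
    (((a1.mul (a2.mul (hasDerivAt_qS_cpow l (-s - 1) x hx))).const_mul 2).const_mul (-s)) using 1
  simp

lemma norm_qS_cpow (l c : ℂ) (x : ℝ) (hx : l + x ≠ 0) :
    ‖qS l x ^ c‖ = ‖l + x‖ ^ (2 * c.re) := by
  have h : 0 < ‖l + x‖ := norm_pos_iff.mpr hx
  rw [qS_real, norm_cpow_eq_rpow_re_of_pos (by positivity), ← Real.rpow_natCast, ← Real.rpow_mul h.le]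
  simp

lemma norm_g2 (s l : ℂ) (x : ℝ) (hx : l + x ≠ 0) :
    ‖g2 s l x‖ ≤ (6 * ‖s‖ + 4 * ‖s‖ * ‖s + 1‖) * ‖l + x‖ ^ (-2 * s.re - 1) := by
  have h : 0 < ‖l + x‖ := norm_pos_iff.mpr hx
  set W := ‖l + x‖ with hW
  have b1 : ‖(l.re + x : ℂ)‖ ≤ W := by
    have := Complex.abs_re_le_norm (l + x)
    simp only [add_re, ofReal_re] at this
    rw [← ofReal_add, norm_real]; exact this
  have b2 : ‖conj l + x‖ = W := by
    rw [hW, ← norm_conj (l + x)]; simp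
  have b3 : ‖qS l x ^ (-s - 1)‖ = W ^ (-2 * s.re - 1) / W := by
    rw [norm_qS_cpow l _ x hx, ← hW, ← Real.rpow_sub_one h.ne']
    congr 1; simp; ring
  have b4 : ‖qS l x ^ (-s - 1 - 1)‖ = W ^ (-2 * s.re - 1) / W / W / W := by
    rw [norm_qS_cpow l _ x hx, ← hW, ← Real.rpow_sub_one h.ne', ← Real.rpow_sub_one h.ne',
      ← Real.rpow_sub_one h.ne']
    congr 1; simp; ring
  set T := W ^ (-2 * s.re - 1) with hT
  have hT0 : 0 < T := by positivity
  have e : g2 s l x = (-s) * (4 * ((l.re + x) * qS l x ^ (-s - 1))) + (-s) * (2 * ((conj l + x) * qS l x ^ (-s - 1)))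
     + s * (s + 1) * (4 * ((conj l + x) * ((l.re + x) * ((l.re + x) * qS l x ^ (-s - 1 - 1))))) := by
    unfold g2; ring
  rw [e]
  have n1 : ‖(-s) * (4 * ((l.re + x) * qS l x ^ (-s - 1)))‖ ≤ ‖s‖ * (4 * (W * (T / W))) := by
    rw [norm_mul, norm_neg, norm_mul, norm_mul, b3]; norm_num
    gcongr
  have n2 : ‖(-s) * (2 * ((conj l + x) * qS l x ^ (-s - 1)))‖ ≤ ‖s‖ * (2 * (W * (T / W))) := by
    rw [norm_mul, norm_neg, norm_mul, norm_mul, b3, b2]; norm_num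
  have n3 : ‖s * (s + 1) * (4 * ((conj l + x) * ((l.re + x) * ((l.re + x) * qS l x ^ (-s - 1 - 1)))))‖
      ≤ ‖s‖ * ‖s + 1‖ * (4 * (W * (W * (W * (T / W / W / W))))) := by
    rw [norm_mul, norm_mul, norm_mul, norm_mul, norm_mul, norm_mul, b4, b2]; norm_num
    gcongr
  refine (norm_add₃_le.trans (add_le_add (add_le_add n1 n2) n3)).trans (le_of_eq ?_)
  field_simp
  ring
end

section
open Filter Topology

def lam (k : ℤ × ℤ) : ℂ := 2 * Real.sqrt 3 * I * (k.1 + k.2 * tau)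

def PhiS (s l : ℂ) : ℂ := 7 * (fS s (l + 1) - fS s (l - 1)) - (fS s (l + 7) - fS s (l - 7))

lemma lam_re (k : ℤ × ℤ) : (lam k).re = -3 * k.2 := by
  have h := Real.mul_self_sqrt (show (0:ℝ) ≤ 3 by norm_num)
  unfold lam
  simp [tau_re, tau_im]
  linear_combination (k.2 : ℝ) * h

lemma lam_im (k : ℤ × ℤ) : (lam k).im = Real.sqrt 3 * (2 * k.1 - k.2) := by
  unfold lam
  simp [tau_re, tau_im]
  ring

lemma normSq_lam_add (k : ℤ × ℤ) (x : ℤ) :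
    normSq (lam k + x) = (((x - 3 * k.2) ^ 2 + 3 * (2 * k.1 - k.2) ^ 2 : ℤ) : ℝ) := by
  have h := Real.mul_self_sqrt (show (0:ℝ) ≤ 3 by norm_num)
  rw [normSq_apply]
  simp only [add_re, add_im, lam_re, lam_im, intCast_re, intCast_im]
  push_cast
  linear_combination (2 * k.1 - k.2 : ℝ)^2 * h

lemma one_le_norm_lam_add (k : ℤ × ℤ) (x : ℤ) (hx : ¬ (3 ∣ x)) : 1 ≤ ‖lam k + x‖ := by
  have h1 : (1 : ℤ) ≤ (x - 3 * k.2) ^ 2 + 3 * (2 * k.1 - k.2) ^ 2 := by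
    have : x - 3 * k.2 ≠ 0 := by intro h; exact hx ⟨k.2, by linarith⟩
    have := sq_pos_of_ne_zero this
    nlinarith [sq_nonneg (2 * k.1 - k.2)]
  have h2 : (1 : ℝ) ≤ normSq (lam k + x) := by
    rw [normSq_lam_add]; exact_mod_cast h1
  rw [normSq_eq_norm_sq] at h2
  nlinarith [norm_nonneg (lam k + x)]

lemma norm_fS_le_one (s : ℂ) (hs : 1 / 2 ≤ s.re) (k : ℤ × ℤ) (x : ℤ) (hx : ¬ (3 ∣ x)) :
    ‖fS s (lam k + x)‖ ≤ 1 := by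
  have h := one_le_norm_lam_add k x hx
  rw [norm_fS _ _ (by intro h0; rw [h0] at h; norm_num at h)]
  exact Real.rpow_le_one_of_one_le_of_nonpos h (by linarith)

lemma norm_PhiS_le (s : ℂ) (hs : 1 / 2 ≤ s.re) (k : ℤ × ℤ) : ‖PhiS s (lam k)‖ ≤ 16 := by
  have h1 := norm_fS_le_one s hs k 1 (by norm_num)
  have h2 := norm_fS_le_one s hs k (-1) (by norm_num)
  have h3 := norm_fS_le_one s hs k 7 (by norm_num)
  have h4 := norm_fS_le_one s hs k (-7) (by norm_num)
  push_cast at h1 h2 h3 h4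
  rw [← sub_eq_add_neg] at h2 h4
  unfold PhiS
  have a1 := norm_sub_le (fS s (lam k + 1)) (fS s (lam k - 1))
  have a2 := norm_sub_le (fS s (lam k + 7)) (fS s (lam k - 7))
  have a3 := norm_sub_le (7 * (fS s (lam k + 1) - fS s (lam k - 1))) (fS s (lam k + 7) - fS s (lam k - 7))
  rw [norm_mul] at a3
  norm_num at a3
  linarith

lemma norm_PhiS_le' (s l : ℂ) (hs : s ∈ Metric.ball (2 : ℂ) (5/4)) (hl : 14 ≤ ‖l‖) :
    ‖PhiS s l‖ ≤ 50000 * ‖l‖ ^ (-(5/2) : ℝ) := by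
  have hs2 : ‖s - 2‖ < 5/4 := by simpa [dist_eq_norm] using hs
  have hsre : 3/4 < s.re := by
    have := (abs_lt.mp (lt_of_le_of_lt (Complex.abs_re_le_norm (s - 2)) hs2)).1
    simp at this; linarith
  have hsn : ‖s‖ ≤ 13/4 := by
    have := norm_add_le (s - 2) 2
    simp at this; linarith
  have hsn1 : ‖s + 1‖ ≤ 17/4 := by
    have := norm_add_le s 1
    simp at this; linarith
  have hl0 : 0 < ‖l‖ := by linarith
  have hw : ∀ x : ℝ, x ∈ Set.Icc (-7:ℝ) 7 → ‖l‖ / 2 ≤ ‖l + x‖ := by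
    intro x hx
    have := norm_sub_le (l + x) x
    rw [add_sub_cancel_right, norm_real, Real.norm_eq_abs] at this
    have := abs_le.mpr hx
    linarith
  have hne : ∀ x : ℝ, x ∈ Set.Icc (-7:ℝ) 7 → l + x ≠ 0 := by
    intro x hx h0
    have := hw x hx
    rw [h0] at this; simp at this; linarith
  set T := ‖l‖ ^ (-(5/2) : ℝ) with hT
  have hT0 : 0 < T := by positivity
  have hg2 : ∀ x : ℝ, x ∈ Set.Icc (-7:ℝ) 7 → ‖g2 s l x‖ ≤ 450 * T := by
    intro x hx
    have h1 := hw x hx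
    refine (norm_g2 s l x (hne x hx)).trans ?_
    have e1 : ‖l + x‖ ^ (-2 * s.re - 1) ≤ 6 * T := by
      calc ‖l + x‖ ^ (-2 * s.re - 1) ≤ ‖l + x‖ ^ (-(5/2) : ℝ) :=
            Real.rpow_le_rpow_of_exponent_le (by linarith) (by linarith)
        _ ≤ (‖l‖ / 2) ^ (-(5/2) : ℝ) := Real.rpow_le_rpow_of_nonpos (by positivity) h1 (by norm_num)
        _ = T * 2 ^ (5/2 : ℝ) := by
          rw [Real.div_rpow hl0.le (by norm_num), Real.rpow_neg (by norm_num : (0:ℝ) ≤ 2), div_inv_eq_mul]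
        _ ≤ 6 * T := by
          have : (2:ℝ) ^ (5/2 : ℝ) ≤ 6 := by
            have h32 : ((2:ℝ) ^ (5/2 : ℝ)) ^ 2 = 32 := by
              rw [← Real.rpow_natCast, ← Real.rpow_mul (by norm_num)]
              norm_num
            have h0 : (0:ℝ) ≤ (2:ℝ) ^ (5/2 : ℝ) := by positivity
            nlinarith
          nlinarith
    have e2 : 6 * ‖s‖ + 4 * ‖s‖ * ‖s + 1‖ ≤ 75 := by
      nlinarith [norm_nonneg s, norm_nonneg (s + 1)]
    calc _ ≤ 75 * (6 * T) := by gcongr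
      _ = _ := by ring
  have hg1 : ∀ x ∈ Set.Icc (-7:ℝ) 7, ∀ y ∈ Set.Icc (-7:ℝ) 7, ‖g1 s l y - g1 s l x‖ ≤ 450 * T * ‖y - x‖ := by
    intro x hx y hy
    exact Convex.norm_image_sub_le_of_norm_hasDerivWithin_le (f := fun y : ℝ => g1 s l y)
      (fun z hz => (hasDerivAt_g1 s l z (hne z hz)).hasDerivWithinAt) hg2 (convex_Icc _ _) hx hy
  set H : ℝ → ℂ := fun x => 7 * (g0 s l x - g0 s l (-x : ℝ)) - (g0 s l (7 * x : ℝ) - g0 s l (-7 * x : ℝ)) with hH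
  have hHd : ∀ x ∈ Set.Icc (0:ℝ) 1, HasDerivAt H
      (7 * ((g1 s l x - g1 s l (7 * x : ℝ)) + (g1 s l (-x : ℝ) - g1 s l (-7 * x : ℝ)))) x := by
    intro x hx
    obtain ⟨hx0, hx1⟩ := hx
    have d1 := hasDerivAt_g0 s l x (hne x ⟨by linarith, by linarith⟩)
    have key : ∀ c : ℝ, (c * x) ∈ Set.Icc (-7:ℝ) 7 →
        HasDerivAt (fun y : ℝ => g0 s l (c * y : ℝ)) (c * g1 s l (c * x : ℝ)) x := by
      intro c hc
      have h1 := hasDerivAt_g0 s l (c * x) (hne _ hc)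
      have h2 := (hasDerivAt_id x).const_mul c
      have := HasDerivAt.scomp (h := fun y => c * y) x h1 (by simpa using h2)
      convert! this using 1
    have d2 := key (-1) ⟨by linarith, by linarith⟩
    have d3 := key 7 ⟨by linarith, by linarith⟩
    have d4 := key (-7) ⟨by linarith, by linarith⟩
    convert! ((d1.sub d2).const_mul 7).sub (d3.sub d4) using 1
    · ext y; simp [hH]
    · simp; ring
  have hHb := Convex.norm_image_sub_le_of_norm_hasDerivWithin_le (f := H) (C := 84 * (450 * T))
      (fun z hz => (hHd z hz).hasDerivWithinAt) (s := Set.Icc (0:ℝ) 1) (x := 0) (y := 1) (by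
        intro x ⟨hx0, hx1⟩
        have a1 := hg1 (7 * x) ⟨by linarith, by linarith⟩ x ⟨by linarith, by linarith⟩
        have a2 := hg1 (-7 * x) ⟨by linarith, by linarith⟩ (-x) ⟨by linarith, by linarith⟩
        have b1 : ‖x - 7 * x‖ ≤ 6 := by rw [Real.norm_eq_abs, abs_le]; constructor <;> linarith
        have b2 : ‖-x - (-7 * x)‖ ≤ 6 := by rw [Real.norm_eq_abs, abs_le]; constructor <;> linarith
        rw [norm_mul]
        have a3 := norm_add_le (g1 s l x - g1 s l (7 * x : ℝ)) (g1 s l (-x : ℝ) - g1 s l (-7 * x : ℝ))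
        have c1 := a1.trans (mul_le_mul_of_nonneg_left b1 (by positivity : 0 ≤ 450 * T))
        have c2 := a2.trans (mul_le_mul_of_nonneg_left b2 (by positivity : 0 ≤ 450 * T))
        rw [show ‖(7:ℂ)‖ = 7 by norm_num]
        linarith) (convex_Icc _ _) (by simp) (by simp)
  have e0 : H 0 = 0 := by simp [hH]
  have e1 : H 1 = PhiS s l := by
    have : ∀ x : ℝ, g0 s l x = fS s (l + x) := fun x => (fS_real s l x).symm
    simp only [hH]
    rw [this, this, this, this]
    unfold PhiS
    push_cast
    simp [sub_eq_add_neg]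
  rw [e0, e1] at hHb
  simp at hHb
  linarith

lemma summable_lam (r : ℝ) (hr : r < -2) : Summable (fun k : ℤ × ℤ => ‖lam k‖ ^ r) := by
  have hp : (0:ℝ) < 2 * Real.sqrt 3 := by positivity
  have h := ZLattice.summable_norm_rpow (hexPair _ hp).lattice r (by simpa using hr)
  rw [← (hexPair _ hp).latticeEquivProd.symm.toEquiv.summable_iff] at h
  convert! h using 1
  ext k
  simp only [Function.comp]
  congr 1
  have := (hexPair _ hp).latticeEquiv_symm_apply k
  refine Eq.trans ?_ (congrArg norm this).symm
  unfold lam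
  simp only [hexPair]
  rw [show (2 * Real.sqrt 3 * I * (k.1 + k.2 * tau) : ℂ) =
    I * (k.1 * ((2 * Real.sqrt 3 : ℝ) : ℂ) + k.2 * (((2 * Real.sqrt 3 : ℝ) : ℂ) * tau)) by push_cast; ring, norm_mul]
  simp

def uB (k : ℤ × ℤ) : ℝ := 50000 * ‖lam k‖ ^ (-(5/2) : ℝ) + (if k = 0 then 16 else 0)

lemma summable_uB : Summable uB :=
  ((summable_lam _ (by norm_num)).mul_left _).add (hasSum_ite_eq (0 : ℤ × ℤ) (16:ℝ)).summable

lemma lam_zero_iff (k : ℤ × ℤ) (h : lam k = 0) : k = 0 := by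
  have h1 := congrArg re h
  have h2 := congrArg im h
  rw [lam_re] at h1
  rw [lam_im] at h2
  simp at h1 h2
  ext
  · simp [h1] at h2; simpa using h2
  · simpa using h1

lemma norm_PhiS_uB (k : ℤ × ℤ) (s : ℂ) (hs : s ∈ Metric.ball (2 : ℂ) (5/4)) : ‖PhiS s (lam k)‖ ≤ uB k := by
  have hs2 : ‖s - 2‖ < 5/4 := by simpa [dist_eq_norm] using hs
  have hsre : 3/4 < s.re := by
    have := (abs_lt.mp (lt_of_le_of_lt (Complex.abs_re_le_norm (s - 2)) hs2)).1
    simp at this; linarith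
  unfold uB
  by_cases hk : k = 0
  · rw [if_pos hk]
    have := norm_PhiS_le s (by linarith) k
    have : 0 ≤ 50000 * ‖lam k‖ ^ (-(5/2) : ℝ) := by positivity
    linarith
  rw [if_neg hk, add_zero]
  rcases le_or_gt 14 ‖lam k‖ with h | h
  · exact norm_PhiS_le' s _ hs h
  · refine (norm_PhiS_le s (by linarith) k).trans ?_
    have h0 : 0 < ‖lam k‖ := norm_pos_iff.mpr (fun h0 => hk (lam_zero_iff k h0))
    have h1 : (14:ℝ) ^ (-(5/2) : ℝ) ≤ ‖lam k‖ ^ (-(5/2) : ℝ) :=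
      Real.rpow_le_rpow_of_nonpos h0 h.le (by norm_num)
    have h2 : (14:ℝ) ^ (-3 : ℝ) ≤ (14:ℝ) ^ (-(5/2) : ℝ) :=
      Real.rpow_le_rpow_of_exponent_le (by norm_num) (by norm_num)
    have h3 : (14:ℝ) ^ (-3 : ℝ) = 1 / 2744 := by
      rw [Real.rpow_neg (by norm_num)]; norm_num
    linarith

lemma diff_PhiS (l : ℂ) (h1 : l + 1 ≠ 0) (h2 : l - 1 ≠ 0) (h3 : l + 7 ≠ 0) (h4 : l - 7 ≠ 0) :
    Differentiable ℂ (fun s => PhiS s l) := by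
  have key : ∀ w : ℂ, w ≠ 0 → Differentiable ℂ (fun s => fS s w) := by
    intro w hw s
    unfold fS
    refine DifferentiableAt.const_mul ?_ _
    refine DifferentiableAt.const_cpow differentiableAt_id.neg (Or.inl ?_)
    simpa using hw
  unfold PhiS
  exact (((key _ h1).sub (key _ h2)).const_mul 7).sub ((key _ h3).sub (key _ h4))

lemma lam_add_ne (k : ℤ × ℤ) (x : ℤ) (hx : ¬ (3 ∣ x)) : lam k + x ≠ 0 := by
  intro h
  have := one_le_norm_lam_add k x hx
  rw [h] at this; norm_num at this

lemma diffOn_tsum : DifferentiableOn ℂ (fun s => ∑' k : ℤ × ℤ, PhiS s (lam k)) (Metric.ball (2:ℂ) (5/4)) := by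
  refine differentiableOn_tsum_of_summable_norm summable_uB (fun k => ?_) Metric.isOpen_ball norm_PhiS_uB
  apply Differentiable.differentiableOn
  apply diff_PhiS
  · simpa using lam_add_ne k 1 (by norm_num)
  · simpa [sub_eq_add_neg] using lam_add_ne k (-1) (by norm_num)
  · simpa using lam_add_ne k 7 (by norm_num)
  · simpa [sub_eq_add_neg] using lam_add_ne k (-7) (by norm_num)
end

section
open Filter Topology

def NN (k : ℤ × ℤ) : ℕ := ((1 - 3 * k.2) ^ 2 + 3 * (2 * k.1 - k.2) ^ 2).toNat

lemma NN_cast (k : ℤ × ℤ) : (NN k : ℤ) = (1 - 3 * k.2) ^ 2 + 3 * (2 * k.1 - k.2) ^ 2 := by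
  unfold NN; rw [Int.toNat_of_nonneg (by positivity)]

lemma normSq_NN (k : ℤ × ℤ) : ((normSq (lam k + 1) : ℝ) : ℂ) = (NN k : ℂ) := by
  have := normSq_lam_add k 1
  rw [← NN_cast] at this
  push_cast at this
  rw [this]; simp

lemma summable_fS (s : ℂ) (hs : 3 / 2 < s.re) : Summable (fun k : ℤ × ℤ => fS s (lam k + 1)) := by
  have h1 := (summable_lam (1 - 2 * s.re) (by linarith)).mul_left ((1/2 : ℝ) ^ (1 - 2 * s.re))
  refine Summable.of_norm_bounded (g := fun k => (1/2 : ℝ) ^ (1 - 2 * s.re) * ‖lam k‖ ^ (1 - 2 * s.re)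
    + (if k = 0 then 1 else 0)) (h1.add (hasSum_ite_eq (0 : ℤ × ℤ) (1:ℝ)).summable) ?_
  intro k
  have hb := one_le_norm_lam_add k 1 (by norm_num)
  have hn := lam_add_ne k 1 (by norm_num)
  push_cast at hb hn
  rw [norm_fS _ _ hn]
  by_cases hk : k = 0
  · rw [if_pos hk]
    have := Real.rpow_le_one_of_one_le_of_nonpos hb (show 1 - 2 * s.re ≤ 0 by linarith)
    have : 0 ≤ (1/2 : ℝ) ^ (1 - 2 * s.re) * ‖lam k‖ ^ (1 - 2 * s.re) := by positivity
    linarith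
  rw [if_neg hk, add_zero, ← Real.mul_rpow (by norm_num) (norm_nonneg _)]
  have h0 : 0 < ‖lam k‖ := norm_pos_iff.mpr (fun h0 => hk (lam_zero_iff k h0))
  apply Real.rpow_le_rpow_of_nonpos (by positivity) _ (by linarith)
  have := norm_sub_le (lam k + 1) 1
  simp at this
  linarith

lemma partB_series (a : ℕ → ℤ) (hA : ∀ m, (a m : ℂ) = ∑' k : (NN ⁻¹' {m}), conj (lam k + 1))
    (s : ℂ) (hs : 3 / 2 < s.re) :
    ∑' m : ℕ, (a m : ℂ) / (m : ℂ) ^ s = ∑' k : ℤ × ℤ, fS s (lam k + 1) := by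
  have h := (summable_fS s hs).hasSum.tsum_fiberwise NN
  rw [← h.tsum_eq]
  congr 1
  ext m
  rw [hA, div_eq_mul_inv, ← cpow_neg, ← tsum_mul_right]
  congr 1
  ext k
  unfold fS
  rw [normSq_NN, show NN k = m from k.2]

lemma lam_neg (k : ℤ × ℤ) : lam (-k) = - lam k := by
  unfold lam; simp; ring

lemma lam_shift (k : ℤ × ℤ) : lam (k + (-1, -2)) = lam k + 6 := by
  apply Complex.ext
  · simp only [add_re, lam_re]; simp; ring
  · simp only [add_im, lam_im]; simp; ring

lemma partB_Phi (s : ℂ) (hs : 3 / 2 < s.re) :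
    ∑' k : ℤ × ℤ, PhiS s (lam k) = 12 * ∑' k : ℤ × ℤ, fS s (lam k + 1) := by
  have h1 := (summable_fS s hs).hasSum
  set A := ∑' k : ℤ × ℤ, fS s (lam k + 1)
  have h2 : HasSum (fun k : ℤ × ℤ => fS s (lam k - 1)) (-A) := by
    have := ((Equiv.neg (ℤ × ℤ)).hasSum_iff.mpr h1).neg
    convert! this using 1
    ext k
    simp only [Function.comp, Equiv.neg_apply]
    rw [lam_neg, ← fS_neg]; congr 1; ring
  have h3 : HasSum (fun k : ℤ × ℤ => fS s (lam k + 7)) A := by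
    have := (Equiv.addRight ((-1, -2) : ℤ × ℤ)).hasSum_iff.mpr h1
    convert! this using 1
    ext k
    simp only [Function.comp, Equiv.coe_addRight]
    rw [lam_shift]; congr 1; ring
  have h4 : HasSum (fun k : ℤ × ℤ => fS s (lam k - 7)) (-A) := by
    have := ((Equiv.neg (ℤ × ℤ)).hasSum_iff.mpr h3).neg
    convert! this using 1
    ext k
    simp only [Function.comp, Equiv.neg_apply]
    rw [lam_neg, ← fS_neg]; congr 1; ring
  have := ((h1.sub h2).mul_left 7).sub (h3.sub h4)
  unfold PhiS
  rw [this.tsum_eq]; ring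

lemma partB (ω : ℝ) (hω : 0 < ω)
    (hODE : ∀ z : ℂ, ¬ inLattice ω z → deriv (wp ω) z ^ 2 = 4 * wp ω z ^ 3 - 1)
    (a : ℕ → ℤ) (hA : ∀ m, (a m : ℂ) = ∑' k : (NN ⁻¹' {m}), conj (lam k + 1))
    (L : ℂ → ℂ) (hLdiff : Differentiable ℂ L)
    (hLser : ∀ s : ℂ, 3 / 2 < s.re → L s = ∑' m : ℕ, (a m : ℂ) / (m : ℂ) ^ s) :
    L 1 = cbrt4 / (4 * (Real.sqrt 3 : ℂ)) * (ω : ℂ) := by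
  have hU : IsOpen (Metric.ball (2:ℂ) (5/4)) := Metric.isOpen_ball
  have an1 := diffOn_tsum.analyticOnNhd hU
  have an2 : AnalyticOnNhd ℂ (fun s => 12 * L s) (Metric.ball (2:ℂ) (5/4)) :=
    (hLdiff.const_mul 12).differentiableOn.analyticOnNhd hU
  have hpre : IsPreconnected (Metric.ball (2:ℂ) (5/4)) := (convex_ball _ _).isPreconnected
  have hev : (fun s => 12 * L s) =ᶠ[𝓝 (2:ℂ)] (fun s => ∑' k : ℤ × ℤ, PhiS s (lam k)) := by
    have ho : IsOpen {s : ℂ | 3 / 2 < s.re} := isOpen_lt continuous_const Complex.continuous_re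
    filter_upwards [ho.mem_nhds (show (2:ℂ) ∈ {s : ℂ | 3 / 2 < s.re} by simp; norm_num)] with s hs
    rw [partB_Phi s hs, hLser s hs, partB_series a hA s hs]
  have heq := an2.eqOn_of_preconnected_of_eventuallyEq an1 hpre (by simp) hev
  have h1 := heq (show (1:ℂ) ∈ Metric.ball (2:ℂ) (5/4) by
    rw [Metric.mem_ball, dist_eq_norm]; norm_num)
  have h2 := (hasSum_comb ω hω hODE).tsum_eq
  simp only at h1
  have h3 : ∑' k : ℤ × ℤ, PhiS 1 (lam k) = ω / (4 * Real.sqrt 3) * 12 * cbrt4 := by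
    rw [← h2]
    congr 1
    ext k
    unfold PhiS
    rw [fS_one, fS_one, fS_one, fS_one]
    rfl
  rw [h3] at h1
  linear_combination h1 / 12
end

section
open Filter Topology

/-- representations of `m` by `x² + 3 * y²` with congruence conditions -/
def SS (m : ℕ) : Finset (ℤ × ℤ) :=
  ((Finset.Icc (-(m:ℤ)) m) ×ˢ (Finset.Icc (-(m:ℤ)) m)).filter
    (fun v => v.1 % 3 = 1 ∧ (v.1 + v.2) % 2 = 1 ∧ v.1 ^ 2 + 3 * v.2 ^ 2 = m)

lemma mem_SS (m : ℕ) (v : ℤ × ℤ) :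
    v ∈ SS m ↔ v.1 % 3 = 1 ∧ (v.1 + v.2) % 2 = 1 ∧ v.1 ^ 2 + 3 * v.2 ^ 2 = m := by
  unfold SS
  simp only [Finset.mem_filter, Finset.mem_product, Finset.mem_Icc, and_iff_right_iff_imp]
  rintro ⟨_, _, h⟩
  have key : ∀ t : ℤ, t ^ 2 ≤ m → -(m:ℤ) ≤ t ∧ t ≤ m := by
    intro t ht
    have h1 := Int.le_self_sq t
    have h2 := Int.le_self_sq (-t)
    constructor <;> nlinarith
  exact ⟨key _ (by nlinarith [sq_nonneg v.2]), key _ (by nlinarith [sq_nonneg v.1, sq_nonneg v.2])⟩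

def bb (m : ℕ) : ℤ := ∑ v ∈ SS m, v.1

lemma sumY (m : ℕ) : ∑ v ∈ SS m, v.2 = 0 := by
  have h : ∑ v ∈ SS m, v.2 = ∑ v ∈ SS m, -v.2 := by
    refine Finset.sum_nbij' (fun v => (v.1, -v.2)) (fun v => (v.1, -v.2)) ?_ ?_ ?_ ?_ ?_
    · intro v hv
      rw [mem_SS] at hv ⊢
      refine ⟨hv.1, by simp only; omega, by simpa using hv.2.2⟩
    · intro v hv
      rw [mem_SS] at hv ⊢
      refine ⟨hv.1, by simp only; omega, by simpa using hv.2.2⟩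
    · intro v _; simp
    · intro v _; simp
    · intro v _; simp
  rw [Finset.sum_neg_distrib] at h
  omega

def mulE (u v : ℤ × ℤ) : ℤ × ℤ := (u.1 * v.1 - 3 * u.2 * v.2, u.1 * v.2 + u.2 * v.1)

lemma mulE_norm (u v : ℤ × ℤ) : (mulE u v).1 ^ 2 + 3 * (mulE u v).2 ^ 2 =
    (u.1 ^ 2 + 3 * u.2 ^ 2) * (v.1 ^ 2 + 3 * v.2 ^ 2) := by
  unfold mulE; ring

lemma mulE_mem (u v : ℤ × ℤ) (q n : ℕ) (hq : 0 < q) (h1 : u.1 % 3 = 1) (h2 : (u.1 + u.2) % 2 = 1)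
    (h3 : u.1 ^ 2 + 3 * u.2 ^ 2 = q) : mulE u v ∈ SS (q * n) ↔ v ∈ SS n := by
  rw [mem_SS, mem_SS, mulE_norm, h3]
  have e1 : (mulE u v).1 % 3 = v.1 % 3 := by
    obtain ⟨k, hk⟩ : ∃ k, u.1 = 3 * k + 1 := ⟨u.1 / 3, by omega⟩
    have : (mulE u v).1 = v.1 + 3 * (k * v.1 - u.2 * v.2) := by
      unfold mulE; simp only; rw [hk]; ring
    rw [this]; omega
  have e2 : ((mulE u v).1 + (mulE u v).2) % 2 = (v.1 + v.2) % 2 := by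
    obtain ⟨k, hk⟩ : ∃ k, u.1 = 2 * k + 1 - u.2 := ⟨(u.1 + u.2) / 2, by omega⟩
    have : (mulE u v).1 + (mulE u v).2 = (v.1 + v.2) + 2 * (k * (v.1 + v.2) - 2 * u.2 * v.2) := by
      unfold mulE; simp only; rw [hk]; ring
    rw [this]; omega
  rw [e1, e2]
  have hq' : (q : ℤ) ≠ 0 := by exact_mod_cast hq.ne'
  push_cast
  rw [mul_right_inj' hq']

lemma mulE_inj (u : ℤ × ℤ) (q : ℕ) (hq : 0 < q) (h3 : u.1 ^ 2 + 3 * u.2 ^ 2 = q) :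
    Function.Injective (mulE u) := by
  intro v w h
  have a := congrArg Prod.fst h
  have b := congrArg Prod.snd h
  simp only [mulE] at a b
  have hq' : (q : ℤ) ≠ 0 := by exact_mod_cast hq.ne'
  ext
  · apply mul_left_cancel₀ hq'; rw [← h3]; linear_combination u.1 * a + 3 * u.2 * b
  · apply mul_left_cancel₀ hq'; rw [← h3]; linear_combination u.1 * b - u.2 * a

lemma sum_image (u : ℤ × ℤ) (q n : ℕ) (hq : 0 < q) (h3 : u.1 ^ 2 + 3 * u.2 ^ 2 = q) :
    ∑ v ∈ (SS n).image (mulE u), v.1 = u.1 * bb n := by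
  rw [Finset.sum_image (fun _ _ _ _ h => mulE_inj u q hq h3 h)]
  simp only [mulE]
  rw [Finset.sum_sub_distrib, ← Finset.mul_sum, ← Finset.mul_sum, sumY]
  simp [bb]

lemma bb_one : bb 1 = 1 := by
  have : SS 1 = {(1, 0)} := by decide
  unfold bb; rw [this]; simp

lemma bb_bad (p n : ℕ) (hp : p.Prime) (h : p ∣ 6) : bb (p * n) = 0 := by
  have hem : SS (p * n) = ∅ := by
    rw [Finset.eq_empty_iff_forall_notMem]
    intro v hv
    rw [mem_SS] at hv
    obtain ⟨h1, h2, h3⟩ := hv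
    have hp6 : p = 2 ∨ p = 3 := by
      have := (Nat.Prime.dvd_mul hp).mp (show p ∣ 2 * 3 from h)
      rcases this with h | h
      · left; exact (Nat.prime_dvd_prime_iff_eq hp Nat.prime_two).mp h
      · right; exact (Nat.prime_dvd_prime_iff_eq hp Nat.prime_three).mp h
    rcases hp6 with rfl | rfl
    · obtain ⟨k, hk⟩ : ∃ k, v.1 = 2 * k + 1 - v.2 := ⟨(v.1 + v.2) / 2, by omega⟩
      rw [hk] at h3
      push_cast at h3
      have : 2 * ((n:ℤ) - 2 * k ^ 2 - 2 * k + 2 * k * v.2 + v.2 - 2 * v.2 ^ 2) = 1 := by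
        linear_combination -h3
      omega
    · obtain ⟨k, hk⟩ : ∃ k, v.1 = 3 * k + 1 := ⟨v.1 / 3, by omega⟩
      rw [hk] at h3
      push_cast at h3
      have : 3 * ((n:ℤ) - 3 * k ^ 2 - 2 * k - v.2 ^ 2) = 1 := by
        linear_combination -h3
      omega
  unfold bb; rw [hem]; simp

/-- both coordinates divisible -/
lemma SS_both (p n : ℕ) (hp : p.Prime) (h2 : p ≠ 2) (v : ℤ × ℤ) (hv : v ∈ SS (p * n))
    (d1 : (p : ℤ) ∣ v.1) (d2 : (p : ℤ) ∣ v.2) (e : ℤ) (he : e = p ∨ e = -p) (he3 : e % 3 = 1) :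
    ∃ m, n = p * m ∧ v ∈ (SS m).image (mulE (e, 0)) := by
  have hee : e ^ 2 = (p:ℤ) ^ 2 := by rcases he with rfl | rfl <;> ring
  have d1' : e ∣ v.1 := by rcases he with rfl | rfl; exacts [d1, (neg_dvd).mpr d1]
  have d2' : e ∣ v.2 := by rcases he with rfl | rfl; exacts [d2, (neg_dvd).mpr d2]
  obtain ⟨x, hx⟩ := d1'
  obtain ⟨y, hy⟩ := d2'
  have hvn := ((mem_SS _ _).mp hv).2.2
  have hp0 : (p : ℤ) ≠ 0 := by exact_mod_cast hp.ne_zero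
  have hn : (n : ℤ) = p * (x ^ 2 + 3 * y ^ 2) := by
    apply mul_left_cancel₀ hp0
    rw [hx, hy] at hvn
    push_cast at hvn
    linear_combination -hvn + (x ^ 2 + 3 * y ^ 2) * hee
  have hpn : p ∣ n := by
    rw [← Int.natCast_dvd_natCast]; exact ⟨_, hn⟩
  obtain ⟨m, hm⟩ := hpn
  refine ⟨m, hm, ?_⟩
  rw [Finset.mem_image]
  have hvv : mulE (e, 0) (x, y) = v := by
    ext <;> simp [mulE, hx, hy]
  refine ⟨(x, y), ?_, hvv⟩
  have hodd : p % 2 = 1 := hp.eq_two_or_odd.resolve_left h2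
  rw [← mulE_mem (e, 0) (x, y) (p ^ 2) m (by have := hp.pos; positivity) he3 (by simp only; omega)
    (by push_cast; simp [hee]), hvv]
  rw [hm] at hv
  convert hv using 2
  ring

lemma image_sub (p m : ℕ) (hp : p.Prime) (h2 : p ≠ 2) (e : ℤ) (he : e = p ∨ e = -p) (he3 : e % 3 = 1) :
    (SS m).image (mulE (e, 0)) ⊆ SS (p * (p * m)) := by
  have hee : e ^ 2 = (p:ℤ) ^ 2 := by rcases he with rfl | rfl <;> ring
  have hodd : p % 2 = 1 := hp.eq_two_or_odd.resolve_left h2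
  intro v hv
  rw [Finset.mem_image] at hv
  obtain ⟨w, hw, rfl⟩ := hv
  rw [← mul_assoc, ← sq]
  rwa [mulE_mem (e, 0) w (p ^ 2) m (by have := hp.pos; positivity) he3 (by simp only; omega)
    (by push_cast; simp [hee])]

lemma sum_image_e (p m : ℕ) (hp : p.Prime) (e : ℤ) (he : e = p ∨ e = -p) :
    ∑ v ∈ (SS m).image (mulE (e, 0)), v.1 = e * bb m := by
  have hee : e ^ 2 = (p:ℤ) ^ 2 := by rcases he with rfl | rfl <;> ring
  exact sum_image (e, 0) (p ^ 2) m (by have := hp.pos; positivity) (by push_cast; simp [hee])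

/-- inert primes -/
lemma inert_dvd (p : ℕ) (hp : p.Prime) (h2 : p ≠ 2) (h3 : p % 3 = 2) (x y : ℤ)
    (h : (p : ℤ) ∣ x ^ 2 + 3 * y ^ 2) : (p : ℤ) ∣ x ∧ (p : ℤ) ∣ y := by
  have : Fact p.Prime := ⟨hp⟩
  have hp3 : p ≠ 3 := by rintro rfl; omega
  have hx : ((x : ZMod p)) ^ 2 + 3 * (y : ZMod p) ^ 2 = 0 := by
    have := (ZMod.intCast_zmod_eq_zero_iff_dvd _ _).mpr h
    push_cast at this; exact this
  have h2' : (2 : ZMod p) ≠ 0 := by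
    intro h0
    have : ((2 : ℕ) : ZMod p) = 0 := by exact_mod_cast h0
    rw [ZMod.natCast_eq_zero_iff] at this
    exact h2 ((Nat.prime_dvd_prime_iff_eq hp Nat.prime_two).mp this)
  have h3' : (3 : ZMod p) ≠ 0 := by
    intro h0
    have : ((3 : ℕ) : ZMod p) = 0 := by exact_mod_cast h0
    rw [ZMod.natCast_eq_zero_iff] at this
    exact hp3 ((Nat.prime_dvd_prime_iff_eq hp Nat.prime_three).mp this)
  have hy : (y : ZMod p) = 0 := by
    by_contra hy
    obtain ⟨z, hz⟩ : ∃ z : ZMod p, z = (x / y - 1) / 2 := ⟨_, rfl⟩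
    have hzz : z ^ 2 + z + 1 = 0 := by
      rw [hz]; field_simp; linear_combination hx
    have hz3 : z ^ 3 = 1 := by linear_combination (z - 1) * hzz
    have hz0 : z ≠ 0 := by rintro rfl; simp at hzz
    have hz1 := ZMod.pow_card_sub_one_eq_one hz0
    rw [show p - 1 = 3 * (p / 3) + 1 by omega, pow_succ, pow_mul, hz3, one_pow, one_mul] at hz1
    rw [hz1] at hzz
    exact h3' (by linear_combination hzz)
  rw [hy] at hx
  have hx' : (x : ZMod p) = 0 := by simpa using hx
  exact ⟨(ZMod.intCast_zmod_eq_zero_iff_dvd _ _).mp hx', (ZMod.intCast_zmod_eq_zero_iff_dvd _ _).mp hy⟩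

lemma bb_inert (p : ℕ) (hp : p.Prime) (h2 : p ≠ 2) (h3 : p % 3 = 2) :
    (∀ n, ¬ p ∣ n → bb (p * n) = 0) ∧ (∀ m, bb (p * (p * m)) = - (p : ℤ) * bb m) := by
  have key : ∀ n, ∀ v ∈ SS (p * n), ∃ m, n = p * m ∧ v ∈ (SS m).image (mulE (-(p:ℤ), 0)) := by
    intro n v hv
    obtain ⟨d1, d2⟩ := inert_dvd p hp h2 h3 v.1 v.2 (by rw [((mem_SS _ _).mp hv).2.2]; push_cast; exact ⟨_, rfl⟩)
    exact SS_both p n hp h2 v hv d1 d2 (-p) (Or.inr rfl) (by omega)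
  constructor
  · intro n hn
    have : SS (p * n) = ∅ := by
      rw [Finset.eq_empty_iff_forall_notMem]
      intro v hv
      obtain ⟨m, hm, _⟩ := key n v hv
      exact hn ⟨m, hm⟩
    unfold bb; rw [this]; simp
  · intro m
    have : SS (p * (p * m)) = (SS m).image (mulE (-(p:ℤ), 0)) := by
      apply Finset.Subset.antisymm
      · intro v hv
        obtain ⟨m', hm, hh⟩ := key _ v hv
        rwa [Nat.eq_of_mul_eq_mul_left hp.pos hm]
      · exact image_sub p m hp h2 _ (Or.inr rfl) (by omega)
    rw [bb, this, sum_image_e p m hp _ (Or.inr rfl)]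

/-- split primes -/
lemma bb_split (p : ℕ) (hp : p.Prime) (h2 : p ≠ 2) (hp3 : p ≠ 3) (A B : ℤ) (hA : A % 3 = 1)
    (hN : A ^ 2 + 3 * B ^ 2 = p) :
    (∀ n, ¬ p ∣ n → bb (p * n) = 2 * A * bb n) ∧
    (∀ m, bb (p * (p * m)) = 2 * A * bb (p * m) - (p : ℤ) * bb m) := by
  have hpp : Prime (p : ℤ) := Nat.prime_iff_prime_int.mp hp
  have hp0 : (p : ℤ) ≠ 0 := hpp.ne_zero
  have hodd : (p : ℤ) % 2 = 1 := by have := hp.eq_two_or_odd.resolve_left h2; omega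
  have hAB : (A + B) % 2 = 1 := by
    have : (p : ℤ) = (A + B) + 2 * (B * B) + (A * (A - 1)) + (B * (B - 1)) := by rw [← hN]; ring
    have e1 := Int.even_mul_pred_self A
    have e2 := Int.even_mul_pred_self B
    obtain ⟨r, hr⟩ := e1
    obtain ⟨t, ht⟩ := e2
    rw [hr, ht] at this
    omega
  have hp1 : (p : ℤ) % 3 = 1 := by
    obtain ⟨k, hk⟩ : ∃ k, A = 3 * k + 1 := ⟨A / 3, by omega⟩
    have : (p : ℤ) = 1 + 3 * (3 * k ^ 2 + 2 * k + B ^ 2) := by rw [← hN, hk]; ring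
    omega
  have nd2 : ¬ (p : ℤ) ∣ 2 := by
    intro h; exact h2 ((Nat.prime_dvd_prime_iff_eq hp Nat.prime_two).mp (by exact_mod_cast h))
  have nd3 : ¬ (p : ℤ) ∣ 3 := by
    intro h; exact hp3 ((Nat.prime_dvd_prime_iff_eq hp Nat.prime_three).mp (by exact_mod_cast h))
  have nsq : ¬ ((p : ℤ) ∣ A ∧ (p : ℤ) ∣ B) := by
    rintro ⟨⟨r, hr⟩, ⟨t, ht⟩⟩
    have : (p : ℤ) * (r ^ 2 + 3 * t ^ 2) = 1 := by
      apply mul_left_cancel₀ hp0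
      rw [hr, ht] at hN
      linear_combination hN
    exact hpp.not_isUnit (IsUnit.of_mul_eq_one _ this)
  have ndA : ¬ (p : ℤ) ∣ A := by
    intro h
    have : (p : ℤ) ∣ 3 * B ^ 2 := by
      have h1 : (3 * B ^ 2 : ℤ) = p - A ^ 2 := by linarith
      rw [h1]; exact dvd_sub (dvd_refl _) (dvd_pow h two_ne_zero)
    exact nsq ⟨h, hpp.dvd_of_dvd_pow ((hpp.dvd_mul.mp this).resolve_left nd3)⟩
  have ndB : ¬ (p : ℤ) ∣ B := by
    intro h
    have : (p : ℤ) ∣ A ^ 2 := by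
      have h1 : (A ^ 2 : ℤ) = p - 3 * B ^ 2 := by linarith
      rw [h1]; exact dvd_sub (dvd_refl _) (Dvd.dvd.mul_left (dvd_pow h two_ne_zero) 3)
    exact ndA (hpp.dvd_of_dvd_pow this)
  have hN' : A ^ 2 + 3 * (-B) ^ 2 = p := by rw [← hN]; ring
  have hAB' : (A + -B) % 2 = 1 := by omega
  have m1 : ∀ v n, mulE (A, B) v ∈ SS (p * n) ↔ v ∈ SS n := fun v n =>
    mulE_mem (A, B) v p n hp.pos hA hAB hN
  have m2 : ∀ v n, mulE (A, -B) v ∈ SS (p * n) ↔ v ∈ SS n := fun v n =>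
    mulE_mem (A, -B) v p n hp.pos hA hAB' hN'
  have hdiv : ∀ (C : ℤ) (hC : A ^ 2 + 3 * C ^ 2 = p)
      (mC : ∀ v n, mulE (A, C) v ∈ SS (p * n) ↔ v ∈ SS n) n, ∀ v ∈ SS (p * n),
      (p : ℤ) ∣ A * v.2 - C * v.1 → v ∈ (SS n).image (mulE (A, C)) := by
    intro C hC mC n v hv hd
    have hvn := ((mem_SS _ _).mp hv).2.2
    push_cast at hvn
    have hX : (p : ℤ) ∣ A * v.1 + 3 * C * v.2 := by
      apply hpp.dvd_of_dvd_pow (n := 2)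
      have : (A * v.1 + 3 * C * v.2) ^ 2 = p * (p * n) - 3 * (A * v.2 - C * v.1) ^ 2 := by
        linear_combination (v.1 ^ 2 + 3 * v.2 ^ 2) * hC + p * hvn
      rw [this]
      exact dvd_sub ⟨_, rfl⟩ (Dvd.dvd.mul_left (dvd_pow hd two_ne_zero) 3)
    obtain ⟨Y, hY⟩ := hd
    obtain ⟨X, hX⟩ := hX
    have : mulE (A, C) (X, Y) = v := by
      ext
      · simp only [mulE]
        apply mul_left_cancel₀ hp0
        linear_combination -A * hX + 3 * C * hY + v.1 * hC
      · simp only [mulE]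
        apply mul_left_cancel₀ hp0
        linear_combination -A * hY - C * hX + v.2 * hC
    rw [Finset.mem_image]
    refine ⟨(X, Y), ?_, this⟩
    rw [← mC, this]; exact hv
  have hun : ∀ n, SS (p * n) = (SS n).image (mulE (A, B)) ∪ (SS n).image (mulE (A, -B)) := by
    intro n
    apply Finset.Subset.antisymm
    · intro v hv
      have hvn := ((mem_SS _ _).mp hv).2.2
      push_cast at hvn
      have hd : (p : ℤ) ∣ (A * v.2 - B * v.1) * (A * v.2 - (-B) * v.1) := by
        refine ⟨v.2 ^ 2 - B ^ 2 * n, ?_⟩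
        linear_combination v.2 ^ 2 * hN - B ^ 2 * hvn
      rw [Finset.mem_union]
      rcases hpp.dvd_mul.mp hd with h | h
      · left; exact hdiv B hN m1 n v hv h
      · right; exact hdiv (-B) hN' m2 n v hv h
    · intro v hv
      rw [Finset.mem_union, Finset.mem_image, Finset.mem_image] at hv
      rcases hv with ⟨w, hw, rfl⟩ | ⟨w, hw, rfl⟩
      · exact (m1 w n).mpr hw
      · exact (m2 w n).mpr hw
  have hint : ∀ n, ∀ v ∈ (SS n).image (mulE (A, B)) ∩ (SS n).image (mulE (A, -B)),
      ∃ m, n = p * m ∧ v ∈ (SS m).image (mulE ((p : ℤ), 0)) := by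
    intro n v hv
    have hv0 : v ∈ SS (p * n) := by
      rw [hun]; exact Finset.mem_union_left _ (Finset.mem_inter.mp hv).1
    rw [Finset.mem_inter, Finset.mem_image, Finset.mem_image] at hv
    obtain ⟨⟨w, _, hw⟩, ⟨w', _, hw'⟩⟩ := hv
    have a1 := congrArg Prod.fst hw
    have a2 := congrArg Prod.snd hw
    have a3 := congrArg Prod.fst hw'
    have a4 := congrArg Prod.snd hw'
    simp only [mulE] at a1 a2 a3 a4
    have d1 : (p : ℤ) ∣ A * v.2 - B * v.1 := ⟨w.2, by rw [← a1, ← a2, ← hN]; ring⟩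
    have d2 : (p : ℤ) ∣ A * v.2 + B * v.1 := ⟨w'.2, by rw [← a3, ← a4, ← hN]; ring⟩
    have d3 : (p : ℤ) ∣ 2 * (A * v.2) := by
      rw [show 2 * (A * v.2) = (A * v.2 - B * v.1) + (A * v.2 + B * v.1) by ring]; exact dvd_add d1 d2
    have d4 : (p : ℤ) ∣ 2 * (B * v.1) := by
      rw [show 2 * (B * v.1) = (A * v.2 + B * v.1) - (A * v.2 - B * v.1) by ring]; exact dvd_sub d2 d1
    have d5 := (hpp.dvd_mul.mp ((hpp.dvd_mul.mp d3).resolve_left nd2)).resolve_left ndA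
    have d6 := (hpp.dvd_mul.mp ((hpp.dvd_mul.mp d4).resolve_left nd2)).resolve_left ndB
    exact SS_both p n hp h2 v hv0 d6 d5 p (Or.inl rfl) hp1
  have hsum : ∀ n, bb (p * n) + ∑ v ∈ (SS n).image (mulE (A, B)) ∩ (SS n).image (mulE (A, -B)), v.1
      = 2 * A * bb n := by
    intro n
    rw [bb, hun, Finset.sum_union_inter, sum_image (A, B) p n hp.pos hN,
      sum_image (A, -B) p n hp.pos hN']
    ring
  constructor
  · intro n hn
    have : (SS n).image (mulE (A, B)) ∩ (SS n).image (mulE (A, -B)) = ∅ := by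
      rw [Finset.eq_empty_iff_forall_notMem]
      intro v hv
      obtain ⟨m, hm, _⟩ := hint n v hv
      exact hn ⟨m, hm⟩
    have h := hsum n
    rw [this] at h
    simpa using h
  · intro m
    have : (SS (p * m)).image (mulE (A, B)) ∩ (SS (p * m)).image (mulE (A, -B)) =
        (SS m).image (mulE ((p : ℤ), 0)) := by
      apply Finset.Subset.antisymm
      · intro v hv
        obtain ⟨m', hm, hh⟩ := hint _ v hv
        rwa [Nat.eq_of_mul_eq_mul_left hp.pos hm]
      · intro v hv
        rw [Finset.mem_image] at hv
        obtain ⟨w, hw, rfl⟩ := hv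
        rw [Finset.mem_inter, Finset.mem_image, Finset.mem_image]
        refine ⟨⟨mulE (A, -B) w, (m2 w m).mpr hw, ?_⟩, ⟨mulE (A, B) w, (m1 w m).mpr hw, ?_⟩⟩
        · ext <;> simp only [mulE] <;> rw [← hN] <;> ring
        · ext <;> simp only [mulE] <;> rw [← hN] <;> ring
    have h := hsum (p * m)
    rw [this, sum_image_e p m hp _ (Or.inl rfl)] at h
    linarith
end

section
open Filter Topology

lemma ringChar_zmod_ne_two (p : ℕ) [Fact p.Prime] (h2 : p ≠ 2) : ringChar (ZMod p) ≠ 2 := by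
  rw [ZMod.ringChar_zmod_n]; exact h2

lemma card_curve (p : ℕ) [Fact p.Prime] (h2 : p ≠ 2) :
    (Nat.card {xy : ZMod p × ZMod p // xy.2 ^ 2 = xy.1 ^ 3 + 1} : ℤ) =
      p + ∑ x : ZMod p, quadraticChar (ZMod p) (x ^ 3 + 1) := by
  classical
  rw [Nat.card_eq_fintype_card, Fintype.card_subtype]
  have h1 : (Finset.univ.filter (fun xy : ZMod p × ZMod p => xy.2 ^ 2 = xy.1 ^ 3 + 1)).card =
      ∑ x : ZMod p, (Finset.univ.filter (fun y : ZMod p => y ^ 2 = x ^ 3 + 1)).card := by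
    rw [Finset.card_filter, Fintype.sum_prod_type]
    refine Finset.sum_congr rfl fun x _ => ?_
    rw [Finset.card_filter]
  rw [h1]
  push_cast
  have h3 : ∀ x : ZMod p, ((Finset.univ.filter (fun y : ZMod p => y ^ 2 = x ^ 3 + 1)).card : ℤ) =
      quadraticChar (ZMod p) (x ^ 3 + 1) + 1 := by
    intro x
    rw [← quadraticChar_card_sqrts (ringChar_zmod_ne_two p h2)]
    congr 2
    ext y; simp
  rw [Finset.sum_congr rfl (fun x _ => h3 x), Finset.sum_add_distrib]
  simp [ZMod.card]
  ring

lemma ap_inert (p : ℕ) (hp : p.Prime) (h2 : p ≠ 2) (h3 : p % 3 = 2) :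
    (p : ℤ) - Nat.card {xy : ZMod p × ZMod p // xy.2 ^ 2 = xy.1 ^ 3 + 1} = 0 := by
  have : Fact p.Prime := ⟨hp⟩
  rw [card_curve p h2]
  have hinj : Function.Injective (fun x : ZMod p => x ^ 3 + 1) := by
    have hl : Function.LeftInverse (fun u : ZMod p => (u - 1) ^ (2 * (p / 3) + 1)) (fun x : ZMod p => x ^ 3 + 1) := by
      intro x
      simp only [add_sub_cancel_right]
      rw [← pow_mul]
      by_cases hx : x = 0
      · rw [hx, zero_pow (by positivity)]
      · have := ZMod.pow_card_sub_one_eq_one hx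
        rw [show 3 * (2 * (p / 3) + 1) = (p - 1) * 2 + 1 by omega, pow_succ, pow_mul, this]
        simp
    exact hl.injective
  have hbij : Function.Bijective (fun x : ZMod p => x ^ 3 + 1) := Finite.injective_iff_bijective.mp hinj
  have := hbij.sum_comp (fun u => quadraticChar (ZMod p) u)
  rw [this, quadraticChar_sum_zero (ringChar_zmod_ne_two p h2)]
  ring

lemma tau_prim : IsPrimitiveRoot tau 3 := by
  refine IsPrimitiveRoot.mk_of_lt tau (by norm_num) tau_cube ?_
  intro l h0 h3
  have him : tau.im ≠ 0 := by rw [tau_im]; positivity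
  interval_cases l
  · intro h; rw [pow_one] at h; rw [h] at him; simp at him
  · intro h
    rw [tau_sq] at h
    have := congrArg Complex.im h
    simp at this
    exact him this

lemma cube_root_cases (z : ℂ) (h : z ^ 3 = 1) : z = 1 ∨ z = tau ∨ z = tau ^ 2 := by
  have : (z - 1) * ((z - tau) * (z - tau ^ 2)) = 0 := by
    linear_combination h + (-z ^ 2 + z * tau) * tau_sq - tau_cube
  rcases mul_eq_zero.mp this with h | h
  · left; linear_combination h
  rcases mul_eq_zero.mp h with h | h
  · right; left; linear_combination h
  · right; right; linear_combination h

lemma cube_card (p : ℕ) [Fact p.Prime] (h3 : p % 3 = 1) (χ : MulChar (ZMod p) ℂ)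
    (hχ : orderOf χ = 3) (u : ZMod p) [DecidableEq ℂ] :
    ((Finset.univ.filter (fun x : ZMod p => x ^ 3 = u)).card : ℤ) =
      (if u = 0 then 1 else 0) + 3 * (if χ u = 1 then 1 else 0) := by
  have hp : p.Prime := Fact.out
  have hp1 : 1 < p := hp.one_lt
  have hχ3 : χ ^ 3 = 1 := by rw [← hχ]; exact pow_orderOf_eq_one χ
  have hχ1 : χ ≠ 1 := by rintro rfl; simp at hχ
  have hval : ∀ u : ZMod p, u ≠ 0 → χ u ^ 3 = 1 := by
    intro u hu
    have := MulChar.pow_apply_coe χ 3 (Units.mk0 u hu)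
    rw [hχ3, MulChar.one_apply_coe] at this
    exact this.symm
  by_cases hu : u = 0
  · subst hu
    have : (Finset.univ.filter (fun x : ZMod p => x ^ 3 = 0)) = {0} := by
      ext x; simp
    rw [this, MulChar.map_zero]; simp
  by_cases h1 : χ u = 1
  · obtain ⟨g, hg⟩ := IsCyclic.exists_generator (α := (ZMod p)ˣ)
    have hg1 : χ (g : ZMod p) ≠ 1 := by
      intro h
      apply hχ1
      ext v
      obtain ⟨k, hk⟩ := (mem_powers_iff_mem_zpowers.mpr (hg v))
      simp only at hk
      rw [← hk, MulChar.one_apply_coe]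
      push_cast
      rw [map_pow, h, one_pow]
    have hord : orderOf (χ (g : ZMod p)) = 3 := by
      have : Fact (Nat.Prime 3) := ⟨Nat.prime_three⟩
      exact orderOf_eq_prime (hval _ g.ne_zero) hg1
    obtain ⟨k, hk⟩ := (mem_powers_iff_mem_zpowers.mpr (hg (Units.mk0 u hu)))
    simp only at hk
    have hk' : (g : ZMod p) ^ k = u := by
      have := congrArg Units.val hk
      simpa using this
    have hdk : 3 ∣ k := by
      rw [← hord]
      apply orderOf_dvd_of_pow_eq_one
      rw [← map_pow, hk', h1]
    obtain ⟨l, rfl⟩ := hdk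
    have hgo : orderOf g = p - 1 := by
      rw [orderOf_eq_card_of_forall_mem_zpowers hg, Nat.card_eq_fintype_card, ZMod.card_units]
    set z : ZMod p := (g : ZMod p) ^ ((p - 1) / 3) with hz
    set v : ZMod p := (g : ZMod p) ^ l with hv
    have hv3 : v ^ 3 = u := by rw [hv, ← pow_mul, mul_comm, hk']
    have hv0 : v ≠ 0 := by rintro h; rw [h] at hv3; apply hu; rw [← hv3]; simp
    have hz3 : z ^ 3 = 1 := by
      rw [hz, ← pow_mul, show (p - 1) / 3 * 3 = p - 1 by omega]
      exact ZMod.pow_card_sub_one_eq_one g.ne_zero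
    have hz1 : z ≠ 1 := by
      intro h
      have : g ^ ((p - 1) / 3) = 1 := by
        ext; push_cast; exact h
      have := orderOf_dvd_of_pow_eq_one this
      rw [hgo] at this
      have := Nat.le_of_dvd (by omega) this
      omega
    have hzz : z ^ 2 + z + 1 = 0 := by
      have : (z - 1) * (z ^ 2 + z + 1) = 0 := by linear_combination hz3
      exact (mul_eq_zero.mp this).resolve_left (sub_ne_zero.mpr hz1)
    have hz0 : z ≠ 0 := by rintro h; rw [h] at hz3; simp at hz3
    have : (Finset.univ.filter (fun x : ZMod p => x ^ 3 = u)) = {v, v * z, v * z ^ 2} := by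
      ext x
      simp only [Finset.mem_filter, Finset.mem_univ, true_and, Finset.mem_insert,
        Finset.mem_singleton]
      constructor
      · intro hx
        have : (x - v) * ((x - v * z) * (x - v * z ^ 2)) = 0 := by
          linear_combination hx - hv3 + (-x ^ 2 * v + x * v ^ 2 * z) * hzz - v ^ 3 * hz3
        rcases mul_eq_zero.mp this with h | h
        · left; linear_combination h
        rcases mul_eq_zero.mp h with h | h
        · right; left; linear_combination h
        · right; right; linear_combination h
      · rintro (h | h | h)
        · rw [h, hv3]
        · rw [h]; linear_combination hv3 + v ^ 3 * hz3
        · rw [h]; linear_combination hv3 + v ^ 3 * (z ^ 3 + 1) * hz3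
    rw [this, Finset.card_eq_three.mpr ⟨v, v * z, v * z ^ 2, ?_, ?_, ?_, rfl⟩]
    · simp [hu, h1]
    · intro h; apply hz1; apply mul_left_cancel₀ hv0; rw [← h, mul_one]
    · intro h
      have : (1 : ZMod p) = z ^ 2 := by apply mul_left_cancel₀ hv0; rw [← h, mul_one]
      apply hz1
      linear_combination hz3 + z * this
    · intro h
      have h := mul_left_cancel₀ hv0 h
      apply hz1
      apply mul_left_cancel₀ hz0
      rw [mul_one, ← sq]; exact h.symm
  · have : (Finset.univ.filter (fun x : ZMod p => x ^ 3 = u)) = ∅ := by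
      ext x
      simp only [Finset.mem_filter, Finset.mem_univ, true_and, Finset.notMem_empty, iff_false]
      intro hx
      apply h1
      rw [← hx, map_pow]
      apply hval
      rintro rfl
      apply hu; rw [← hx]; simp
    rw [this]; simp [hu, h1]

lemma ap_split (p : ℕ) (hp : p.Prime) (h2 : p ≠ 2) (h3 : p % 3 = 1) :
    ∃ A B : ℤ, A % 3 = 1 ∧ A ^ 2 + 3 * B ^ 2 = p ∧
    (p : ℤ) - Nat.card {xy : ZMod p × ZMod p // xy.2 ^ 2 = xy.1 ^ 3 + 1} = 2 * A := by
  classical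
  have : Fact p.Prime := ⟨hp⟩
  have hp1 : 1 < p := hp.one_lt
  obtain ⟨χ, hχ⟩ := MulChar.exists_mulChar_orderOf (ZMod p) (n := 3) (by rw [ZMod.card]; omega) tau_prim
  have hχ3 : χ ^ 3 = 1 := by rw [← hχ]; exact pow_orderOf_eq_one χ
  have hχ1 : χ ≠ 1 := by rintro rfl; simp at hχ
  have hval : ∀ u : ZMod p, u ≠ 0 → χ u ^ 3 = 1 := by
    intro u hu
    have := MulChar.pow_apply_coe χ 3 (Units.mk0 u hu)
    rw [hχ3, MulChar.one_apply_coe] at this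
    exact this.symm
  have hchar : ringChar ℂ ≠ ringChar (ZMod p) := by
    rw [ZMod.ringChar_zmod_n, ringChar.eq_zero]; omega
  set η := quadraticChar (ZMod p) with hη
  set φ : MulChar (ZMod p) ℂ := η.ringHomComp (Int.castRingHom ℂ) with hφ
  have hφq : φ.IsQuadratic := (quadraticChar_isQuadratic (ZMod p)).comp _
  have hφ1 : φ ≠ 1 := (MulChar.ringHomComp_ne_one_iff (Int.castRingHom ℂ).injective_int).mpr
    (quadraticChar_ne_one (ringChar_zmod_ne_two p h2))
  have hχφ : χ * φ ≠ 1 := by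
    intro h
    have e1 : χ = φ := by rw [← hφq.inv]; exact eq_inv_of_mul_eq_one_left h
    have e2 : χ * χ = 1 := by rw [← e1] at h; exact h
    have : χ ^ 3 = χ := by rw [pow_succ, sq, e2, one_mul]
    exact hχ1 (this.symm.trans hχ3)
  have hJ := jacobiSum_mul_jacobiSum_inv hchar hχ1 hφ1 hχφ
  rw [hφq.inv, ZMod.card] at hJ
  set c : ℂ → ℤ := fun z => ∑ u : ZMod p, if χ u = z then η (1 - u) else 0 with hc
  have t1 : (1 : ℂ) ≠ tau := by
    intro h; have := congrArg Complex.im h; rw [tau_im, Complex.one_im] at this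
    have h0 : (0 : ℝ) < √3 / 2 := by positivity
    linarith
  have t2 : (1 : ℂ) ≠ tau ^ 2 := by
    intro h; rw [tau_sq] at h; have := congrArg Complex.im h; simp [tau_im] at this
  have t3 : tau ≠ tau ^ 2 := by
    intro h; rw [tau_sq] at h; have := congrArg Complex.im h
    rw [Complex.sub_im, Complex.neg_im, Complex.one_im, tau_im] at this
    have h0 : (0 : ℝ) < √3 / 2 := by positivity
    linarith
  have t4 := tau_ne
  have t5 : tau ^ 2 ≠ 0 := pow_ne_zero _ t4
  have J1 : jacobiSum χ φ = c 1 + c tau * tau + c (tau ^ 2) * tau ^ 2 := by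
    simp only [jacobiSum, hc]
    push_cast
    rw [Finset.sum_mul, Finset.sum_mul, ← Finset.sum_add_distrib, ← Finset.sum_add_distrib]
    refine Finset.sum_congr rfl fun u _ => ?_
    have hφu : φ (1 - u) = ((η (1 - u) : ℤ) : ℂ) := rfl
    rw [hφu]
    by_cases hu : u = 0
    · rw [hu, MulChar.map_zero]; simp [t4.symm, t5.symm]
    rcases cube_root_cases _ (hval u hu) with h | h | h
    · rw [h]; simp [t1, t2]
    · rw [h]; simp [t1.symm, t3]; ring
    · rw [h]; simp [t2.symm, t3.symm]; ring
  have J2 : jacobiSum χ⁻¹ φ = c 1 + c tau * tau ^ 2 + c (tau ^ 2) * tau := by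
    simp only [jacobiSum, hc]
    push_cast
    rw [Finset.sum_mul, Finset.sum_mul, ← Finset.sum_add_distrib, ← Finset.sum_add_distrib]
    refine Finset.sum_congr rfl fun u _ => ?_
    have hφu : φ (1 - u) = ((η (1 - u) : ℤ) : ℂ) := rfl
    rw [hφu]
    by_cases hu : u = 0
    · rw [hu, MulChar.map_zero, MulChar.map_zero]; simp [t4.symm, t5.symm]
    have hinv : χ⁻¹ u = χ u ^ 2 := by
      have e : χ⁻¹ u * χ u = 1 := by
        rw [← MulChar.mul_apply, inv_mul_cancel, MulChar.one_apply (isUnit_iff_ne_zero.mpr hu)]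
      have := hval u hu
      calc χ⁻¹ u = χ⁻¹ u * χ u ^ 3 := by rw [this, mul_one]
        _ = (χ⁻¹ u * χ u) * χ u ^ 2 := by ring
        _ = _ := by rw [e, one_mul]
    rw [hinv]
    rcases cube_root_cases _ (hval u hu) with h | h | h
    · rw [h]; simp [t1, t2]
    · rw [h]; simp [t1.symm, t3]; ring
    · rw [h]; simp [t2.symm, t3.symm]; linear_combination (η (1 - u) : ℂ) * tau * tau_cube
  set c0 := c 1 with hc0
  set c1 := c tau with hc1
  set c2 := c (tau ^ 2) with hc2
  have hnorm : c0 ^ 2 + c1 ^ 2 + c2 ^ 2 - c0 * c1 - c0 * c2 - c1 * c2 = p := by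
    rw [J1, J2] at hJ
    have : ((c0 ^ 2 + c1 ^ 2 + c2 ^ 2 - c0 * c1 - c0 * c2 - c1 * c2 : ℤ) : ℂ) = (p : ℤ) := by
      push_cast
      rw [← hJ]
      have q4 : tau ^ 4 = tau := by linear_combination tau * tau_cube
      linear_combination (-(c1 ^ 2 : ℂ) - c2 ^ 2) * tau_cube
        - (c0 * c1 + c0 * c2 : ℂ) * tau_sq - (c1 * c2 : ℂ) * tau_sq - (c1 * c2 : ℂ) * q4
    exact_mod_cast this
  have hsum : c0 + c1 + c2 = -1 := by
    have hz := quadraticChar_sum_zero (ringChar_zmod_ne_two p h2)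
    rw [← (Equiv.subLeft (1 : ZMod p)).sum_comp] at hz
    simp only [Equiv.subLeft_apply] at hz
    have : c0 + c1 + c2 + 1 = ∑ u : ZMod p, η (1 - u) := by
      have e1 : (1 : ℤ) = ∑ u : ZMod p, if u = 0 then η (1 - u) else 0 := by simp
      rw [hc0, hc1, hc2, e1]
      simp only [hc]
      rw [← Finset.sum_add_distrib, ← Finset.sum_add_distrib, ← Finset.sum_add_distrib]
      refine Finset.sum_congr rfl fun u _ => ?_
      by_cases hu : u = 0
      · rw [hu, MulChar.map_zero]; simp [t4.symm, t5.symm]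
      rcases cube_root_cases _ (hval u hu) with h | h | h
      · rw [h]; simp [t1, t2, hu]
      · rw [h]; simp [t1.symm, t3, hu]
      · rw [h]; simp [t2.symm, t3.symm, hu]
    rw [hz] at this
    linarith
  have hpar : ∀ z : ℂ, z ≠ 1 → (2 : ℤ) ∣ c z - (Finset.univ.filter (fun u : ZMod p => χ u = z)).card := by
    intro z hz
    rw [Finset.card_filter]
    push_cast
    rw [← Finset.sum_sub_distrib]
    refine Finset.dvd_sum fun u _ => ?_
    split_ifs with h
    · have hu : 1 - u ≠ 0 := by
        intro h0
        have : u = 1 := by linear_combination -h0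
        rw [this, MulChar.map_one] at h
        exact hz h.symm
      rcases quadraticChar_dichotomy hu with h | h
      · rw [hη, h]; norm_num
      · rw [hη, h]; norm_num
    · simp
  have hcard : (Finset.univ.filter (fun u : ZMod p => χ u = tau)).card =
      (Finset.univ.filter (fun u : ZMod p => χ u = tau ^ 2)).card := by
    have hmv : ∀ u : ZMod p, χ u⁻¹ * χ u = if u = 0 then 0 else 1 := by
      intro u
      split_ifs with hu
      · rw [hu, MulChar.map_zero, mul_zero]
      · rw [← map_mul, inv_mul_cancel₀ hu, MulChar.map_one]
    refine Finset.card_nbij' (fun u => u⁻¹) (fun u => u⁻¹) ?_ ?_ ?_ ?_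
    · intro u hu
      simp only [Finset.coe_filter, Finset.mem_univ, true_and, Set.mem_setOf_eq] at hu ⊢
      have h0 : u ≠ 0 := by rintro rfl; rw [MulChar.map_zero] at hu; exact t4 hu.symm
      have := hmv u
      rw [if_neg h0, hu] at this
      linear_combination tau ^ 2 * this - χ u⁻¹ * tau_cube
    · intro u hu
      simp only [Finset.coe_filter, Finset.mem_univ, true_and, Set.mem_setOf_eq] at hu ⊢
      have h0 : u ≠ 0 := by rintro rfl; rw [MulChar.map_zero] at hu; exact t5 hu.symm
      have := hmv u
      rw [if_neg h0, hu] at this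
      linear_combination tau * this - χ u⁻¹ * tau_cube
    · intro u _; simp
    · intro u _; simp
  obtain ⟨B, hB⟩ : ∃ B, c1 - c2 = 2 * B := by
    have a1 := hpar tau t1.symm
    have a2 := hpar (tau ^ 2) t2.symm
    rw [hcard] at a1
    have := dvd_sub a1 a2
    rw [sub_sub_sub_cancel_right] at this
    exact this
  have hcubecard : ∀ u : ZMod p, ((Finset.univ.filter (fun x : ZMod p => x ^ 3 = u)).card : ℤ) =
      (if u = 0 then 1 else 0) + 3 * (if χ u = 1 then 1 else 0) := by
    exact fun u => cube_card p h3 χ hχ u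
  have hS : ∑ x : ZMod p, η (x ^ 3 + 1) = 1 + 3 * c0 := by
    have e1 : ∑ x : ZMod p, η (x ^ 3 + 1) = ∑ x : ZMod p, η (1 - x ^ 3) := by
      rw [← Equiv.sum_comp (Equiv.neg (ZMod p)) (fun x => η (x ^ 3 + 1))]
      refine Finset.sum_congr rfl fun x _ => ?_
      congr 1
      simp only [Equiv.neg_apply]; ring
    rw [e1, ← Finset.sum_fiberwise' Finset.univ (fun x : ZMod p => x ^ 3) (fun u => η (1 - u))]
    simp only [Finset.sum_const, nsmul_eq_mul, hcubecard]
    have e2 : (1 : ℤ) = ∑ u : ZMod p, if u = 0 then η (1 - u) else 0 := by simp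
    have e3 : ∑ u : ZMod p, ((if u = 0 then 1 else 0) + 3 * (if χ u = 1 then 1 else 0)) * η (1 - u)
        = (∑ u : ZMod p, if u = 0 then η (1 - u) else 0) +
          3 * ∑ u : ZMod p, if χ u = 1 then η (1 - u) else 0 := by
      rw [Finset.mul_sum, ← Finset.sum_add_distrib]
      refine Finset.sum_congr rfl fun u _ => ?_
      split_ifs <;> ring
    push_cast
    rw [e3, ← e2]
  refine ⟨-(c0 - c2 - B), B, ?_, ?_, ?_⟩
  · omega
  · have : c1 = c2 + 2 * B := by linarith
    rw [← hnorm, this]; ring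
  · rw [card_curve p h2, hS]
    linarith
end

section
open Filter Topology

lemma a_eq_bb (a : ℕ → ℤ) (ha1 : a 1 = 1)
    (hamul : ∀ m k : ℕ, Nat.Coprime m k → a (m * k) = a m * a k)
    (habad : ∀ p : ℕ, p.Prime → p ∣ 6 → ∀ j : ℕ, 1 ≤ j → a (p ^ j) = 0)
    (hagood : ∀ p : ℕ, p.Prime → ¬ p ∣ 6 →
      a p = (p : ℤ) - Nat.card {xy : ZMod p × ZMod p // xy.2 ^ 2 = xy.1 ^ 3 + 1})
    (harec : ∀ p : ℕ, p.Prime → ¬ p ∣ 6 → ∀ j : ℕ,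
      a (p ^ (j + 2)) = a p * a (p ^ (j + 1)) - (p : ℤ) * a (p ^ j)) :
    ∀ n : ℕ, 1 ≤ n → a n = bb n := by
  intro n
  induction n using Nat.strong_induction_on with
  | _ n ih =>
  intro hn
  by_cases h1 : n = 1
  · rw [h1, ha1, bb_one]
  have hp : (n.minFac).Prime := Nat.minFac_prime h1
  obtain ⟨n', hn'⟩ := Nat.minFac_dvd n
  set p := n.minFac with hpdef
  clear_value p
  have hp1 := hp.one_lt
  have hn'0 : 1 ≤ n' := by
    rcases Nat.eq_zero_or_pos n' with h | h
    · rw [h] at hn'; omega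
    · exact h
  have hlt : n' < n := by rw [hn']; nlinarith
  by_cases h6 : p ∣ 6
  · rw [hn', bb_bad p n' hp h6]
    obtain ⟨j, m, hm, hjm⟩ := Nat.exists_eq_pow_mul_and_not_dvd (n := n') (by omega) p hp.ne_one
    rw [hjm, ← mul_assoc, ← pow_succ', hamul _ _ (Nat.Coprime.pow_left _ ((hp.coprime_iff_not_dvd).mpr hm)),
      habad p hp h6 _ (by omega), zero_mul]
  · have h2 : p ≠ 2 := by rintro rfl; exact h6 (by norm_num)
    have h3 : p ≠ 3 := by rintro rfl; exact h6 (by norm_num)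
    have hA1 : ∀ n, ¬ p ∣ n → a (p * n) = a p * a n := fun n hn =>
      hamul _ _ ((hp.coprime_iff_not_dvd).mpr hn)
    have hA2 : ∀ m, 1 ≤ m → a (p * (p * m)) = a p * a (p * m) - (p : ℤ) * a m := by
      intro m hm0
      obtain ⟨j, m', hm, hjm⟩ := Nat.exists_eq_pow_mul_and_not_dvd (n := m) (by omega) p hp.ne_one
      have hc : ∀ i, Nat.Coprime (p ^ i) m' := fun i =>
        Nat.Coprime.pow_left _ ((hp.coprime_iff_not_dvd).mpr hm)
      rw [hjm, show p * (p * (p ^ j * m')) = p ^ (j + 2) * m' by ring,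
        show p * (p ^ j * m') = p ^ (j + 1) * m' by ring, hamul _ _ (hc _), hamul _ _ (hc _),
        hamul _ _ (hc _), harec p hp h6]
      ring
    have hap := hagood p hp h6
    have hp3 : p % 3 ≠ 0 := fun h =>
      h3 ((Nat.prime_dvd_prime_iff_eq Nat.prime_three hp).mp (Nat.dvd_of_mod_eq_zero h)).symm
    have hcases : ∃ c : ℤ, a p = c ∧ (∀ n, ¬ p ∣ n → bb (p * n) = c * bb n) ∧
        (∀ m, bb (p * (p * m)) = c * bb (p * m) - (p : ℤ) * bb m) := by
      rcases (by omega : p % 3 = 2 ∨ p % 3 = 1) with hm | hm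
      · refine ⟨0, ?_, ?_, ?_⟩
        · rw [hap, ap_inert p hp h2 hm]
        · intro n hn; rw [(bb_inert p hp h2 hm).1 n hn]; ring
        · intro m; rw [(bb_inert p hp h2 hm).2 m]; ring
      · obtain ⟨A, B, hA, hN, hc⟩ := ap_split p hp h2 hm
        exact ⟨2 * A, hap.trans hc, (bb_split p hp h2 h3 A B hA hN).1,
          (bb_split p hp h2 h3 A B hA hN).2⟩
    obtain ⟨c, hc, hb1, hb2⟩ := hcases
    by_cases hd : p ∣ n'
    · obtain ⟨m, rfl⟩ := hd
      have hm0 : 1 ≤ m := by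
        rcases Nat.eq_zero_or_pos m with h | h
        · rw [h] at hn'0; omega
        · exact h
      have : m < n := lt_of_le_of_lt (Nat.le_mul_of_pos_left m hp.pos) hlt
      rw [hn', hA2 m hm0, hb2 m, hc, ih _ hlt hn'0, ih m this hm0]
    · rw [hn', hA1 _ hd, hb1 _ hd, hc, ih _ hlt hn'0]

lemma bb_tsum (m : ℕ) : (bb m : ℂ) = ∑' k : (NN ⁻¹' {m}), conj (lam k + 1) := by
  have hc : ∀ k : ℤ × ℤ, conj (lam k + 1) =
      ((1 - 3 * k.2 : ℤ) : ℂ) - (√3 : ℂ) * I * ((2 * k.1 - k.2 : ℤ) : ℂ) := by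
    intro k
    apply Complex.ext
    · simp [lam_re]; ring
    · simp [lam_im]
  let e : (NN ⁻¹' {m}) ≃ (SS m) :=
    { toFun := fun k => ⟨(1 - 3 * k.1.2, 2 * k.1.1 - k.1.2), by
        obtain ⟨k, hk⟩ := k
        have hk' : NN k = m := hk
        have := NN_cast k
        rw [hk'] at this
        rw [mem_SS]
        refine ⟨?_, ?_, ?_⟩
        · simp only; omega
        · simp only; omega
        · simp only; rw [this]⟩
      invFun := fun v => ⟨((v.1.2 + (1 - v.1.1) / 3) / 2, (1 - v.1.1) / 3), by
        obtain ⟨⟨x, y⟩, hv⟩ := v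
        rw [mem_SS] at hv
        obtain ⟨h1, h2, h3⟩ := hv
        simp only at h1 h2 h3 ⊢
        show NN _ = m
        have := NN_cast ((y + (1 - x) / 3) / 2, (1 - x) / 3)
        simp only at this
        rw [show 1 - 3 * ((1 - x) / 3) = x by omega,
          show 2 * ((y + (1 - x) / 3) / 2) - (1 - x) / 3 = y by omega, h3] at this
        exact_mod_cast this⟩
      left_inv := by
        rintro ⟨⟨k1, k2⟩, hk⟩
        apply Subtype.ext
        apply Prod.ext <;> simp only <;> omega
      right_inv := by
        rintro ⟨⟨x, y⟩, hv⟩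
        have hv' := (mem_SS m _).mp hv
        obtain ⟨h1, h2, h3⟩ := hv'
        simp only at h1 h2
        apply Subtype.ext
        apply Prod.ext <;> simp only <;> omega }
  have h1 : ∑' k : (NN ⁻¹' {m}), conj (lam k + 1) =
      ∑' v : SS m, (((v.1.1 : ℤ) : ℂ) - (√3 : ℂ) * I * ((v.1.2 : ℤ) : ℂ)) := by
    rw [← e.tsum_eq]
    refine tsum_congr fun k => ?_
    rw [hc]
    rfl
  rw [h1, Finset.tsum_subtype (SS m) (fun v : ℤ × ℤ => ((v.1 : ℂ) - (√3 : ℂ) * I * (v.2 : ℂ))),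
    Finset.sum_sub_distrib, ← Finset.mul_sum]
  have hy : ∑ v ∈ SS m, ((v.2 : ℤ) : ℂ) = 0 := by
    have := sumY m
    exact_mod_cast this
  rw [hy]
  simp [bb]
end

/-- **Remark 2.1 (2)** of [Qiu]. For the elliptic curve `E₁ : y² = x³ + 1` over `ℚ`,
`L(E₁/ℚ, 1) = (∛4/(4√3))·ω`, where `ω > 0` is the real period constant pinned down by
the differential equation `℘′² = 4℘³ − 1` for the lattice `L_ω = ω·ℤ[τ]`.
The Hasse–Weil L-function `L(E₁/ℚ, s)` is characterized as the entire function agreeing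
for `Re s > 3/2` with the Dirichlet series `Σ aₘ·m^{−s}`, whose coefficients `aₘ` are
multiplicative, vanish at the (additive reduction) primes `p ∣ 6` and their powers,
satisfy `a_p = p + 1 − #E₁(𝔽_p) = p − #{(x,y) ∈ 𝔽_p² | y² = x³ + 1}` at the good primes
`p ∤ 6`, and obey there the usual Euler-product recursion
`a_{p^{k+2}} = a_p·a_{p^{k+1}} − p·a_{p^k}`. -/
theorem L_value_of_E1_at_one
    (ω : ℝ) (hω : 0 < ω)
    (hODE : ∀ z : ℂ, ¬ inLattice ω z → deriv (wp ω) z ^ 2 = 4 * wp ω z ^ 3 - 1)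
    (a : ℕ → ℤ) (ha1 : a 1 = 1)
    (hamul : ∀ m k : ℕ, Nat.Coprime m k → a (m * k) = a m * a k)
    (habad : ∀ p : ℕ, p.Prime → p ∣ 6 → ∀ j : ℕ, 1 ≤ j → a (p ^ j) = 0)
    (hagood : ∀ p : ℕ, p.Prime → ¬ p ∣ 6 →
      a p = (p : ℤ) - Nat.card {xy : ZMod p × ZMod p // xy.2 ^ 2 = xy.1 ^ 3 + 1})
    (harec : ∀ p : ℕ, p.Prime → ¬ p ∣ 6 → ∀ j : ℕ,
      a (p ^ (j + 2)) = a p * a (p ^ (j + 1)) - (p : ℤ) * a (p ^ j))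
    (L : ℂ → ℂ) (hLdiff : Differentiable ℂ L)
    (hLser : ∀ s : ℂ, 3 / 2 < s.re → L s = ∑' m : ℕ, (a m : ℂ) / (m : ℂ) ^ s) :
    L 1 = cbrt4 / (4 * (Real.sqrt 3 : ℂ)) * (ω : ℂ) := by
  refine partB ω hω hODE bb bb_tsum L hLdiff ?_
  intro s hs
  rw [hLser s hs]
  refine tsum_congr fun m => ?_
  rcases Nat.eq_zero_or_pos m with h | h
  · have hs0 : s ≠ 0 := by
      rintro rfl
      rw [Complex.zero_re] at hs
      linarith
    rw [h, Nat.cast_zero, Complex.zero_cpow hs0, div_zero, div_zero]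
  · rw [a_eq_bb a ha1 hamul habad hagood harec m h]
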